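/- Under assumptions (H1)–(H5), the value functions V^ε are locally equibounded, and for t > 0 their upper weak semilimit does not depend on the fast variable, so one can write V̄(x,t) := (limsup^# V^ε)(x,y,t) for any y. Then V̄ is a viscosity subsolution of u_t + H̄(x,Du) = 0 on ℝ^N × (0,∞), and for every x0 ∈ ℝ^N one has limsup_{(x,t)→(x0,0), t>0} V̄(x,t) ≤ ū0(x0), where ū0(x) = inf_{y ∈ ℝ^M} u0(x,y). -/

import Mathlib

open Set MeasureTheory Metric Filter
open scoped RealInnerProductSpace Topology

noncomputable section

/-- `ℝ^n` with the Euclidean structure. -/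
abbrev Euc (n : ℕ) : Type := EuclideanSpace ℝ (Fin n)

/-- A control: a measurable map with values in the control set `A`. -/
def IsControl {k : ℕ} (A : Set (Euc k)) (α : ℝ → Euc k) : Prop :=
  Measurable α ∧ ∀ t, α t ∈ A

/-- `(ξ, η)` is a trajectory of the controlled dynamics `(CD_ε)` for the control `α`:
this is the integral form, equivalent to `(ξ, η)` being locally absolutely continuous
with `ξ' = ε f(ξ, η, α)` and `η' = g(ξ, η, α)` a.e. on `[0, ∞)`. -/
def IsTrajectory {N M k : ℕ}
    (f : Euc N → Euc M → Euc k → Euc N) (g : Euc N → Euc M → Euc k → Euc M)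
    (ε : ℝ) (α : ℝ → Euc k) (ξ : ℝ → Euc N) (η : ℝ → Euc M) : Prop :=
  (∀ t, 0 ≤ t → IntervalIntegrable (fun s => f (ξ s) (η s) (α s)) volume 0 t) ∧
  (∀ t, 0 ≤ t → IntervalIntegrable (fun s => g (ξ s) (η s) (α s)) volume 0 t) ∧
  (∀ t, 0 ≤ t → ξ t = ξ 0 + ε • ∫ s in (0:ℝ)..t, f (ξ s) (η s) (α s)) ∧
  (∀ t, 0 ≤ t → η t = η 0 + ∫ s in (0:ℝ)..t, g (ξ s) (η s) (α s))

/-- The value function `V^ε(x, y, t)` of the singularly perturbed optimal control problem. -/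
def valueFun {N M k : ℕ} (A : Set (Euc k))
    (f : Euc N → Euc M → Euc k → Euc N) (g : Euc N → Euc M → Euc k → Euc M)
    (ℓ : Euc N → Euc M → Euc k → ℝ) (u0 : Euc N → Euc M → ℝ)
    (ε : ℝ) (x : Euc N) (y : Euc M) (t : ℝ) : ℝ :=
  sInf { v : ℝ | ∃ (α : ℝ → Euc k) (ξ : ℝ → Euc N) (η : ℝ → Euc M),
    IsControl A α ∧ IsTrajectory f g ε α ξ η ∧ ξ 0 = x ∧ η 0 = y ∧
    IntervalIntegrable (fun s => ℓ (ξ s) (η s) (α s)) volume 0 (t / ε) ∧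
    v = ε * (∫ s in (0:ℝ)..(t / ε), ℓ (ξ s) (η s) (α s)) + u0 (ξ (t / ε)) (η (t / ε)) }

/-- The Hamiltonian `H(x,y,p,q) = max_{a ∈ A} { -p·f(x,y,a) - q·g(x,y,a) - ℓ(x,y,a) }`. -/
def Ham {N M k : ℕ} (A : Set (Euc k))
    (f : Euc N → Euc M → Euc k → Euc N) (g : Euc N → Euc M → Euc k → Euc M)
    (ℓ : Euc N → Euc M → Euc k → ℝ)
    (x : Euc N) (y : Euc M) (p : Euc N) (q : Euc M) : ℝ :=
  sSup ((fun a => -⟪p, f x y a⟫ - ⟪q, g x y a⟫ - ℓ x y a) '' A)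

/-- Viscosity subsolution of the stationary equation `G(y, Du) = b` on `Ω`. -/
def IsVSubOn {m : ℕ} (G : Euc m → Euc m → ℝ) (b : ℝ) (Ω : Set (Euc m)) (u : Euc m → ℝ) : Prop :=
  UpperSemicontinuousOn u Ω ∧
  ∀ ψ : Euc m → ℝ, ContDiff ℝ 1 ψ → ∀ y ∈ Ω,
    IsLocalMaxOn (fun z => u z - ψ z) Ω y → G y (gradient ψ y) ≤ b

/-- Viscosity supersolution of the stationary equation `G(y, Du) = b` on `Ω`. -/
def IsVSupOn {m : ℕ} (G : Euc m → Euc m → ℝ) (b : ℝ) (Ω : Set (Euc m)) (u : Euc m → ℝ) : Prop :=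
  LowerSemicontinuousOn u Ω ∧
  ∀ ψ : Euc m → ℝ, ContDiff ℝ 1 ψ → ∀ y ∈ Ω,
    IsLocalMinOn (fun z => u z - ψ z) Ω y → b ≤ G y (gradient ψ y)

/-- The set of levels `b` for which `F(y, Du) = b` has a viscosity subsolution on `ℝ^m`. -/
def subsolLevels {m : ℕ} (F : Euc m → Euc m → ℝ) : Set ℝ :=
  { b : ℝ | ∃ u : Euc m → ℝ, IsVSubOn F b univ u }

/-- The critical value of a Hamiltonian `F` on `ℝ^m`. -/
def critVal {m : ℕ} (F : Euc m → Euc m → ℝ) : ℝ :=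
  sInf (subsolLevels F)

/-- The effective Hamiltonian `H̄(x, p)`. -/
def effH {N M k : ℕ} (A : Set (Euc k))
    (f : Euc N → Euc M → Euc k → Euc N) (g : Euc N → Euc M → Euc k → Euc M)
    (ℓ : Euc N → Euc M → Euc k → ℝ) (x : Euc N) (p : Euc N) : ℝ :=
  critVal (fun (y q : Euc M) => Ham A f g ℓ x y p q)

/-- The frozen Hamiltonian `H₀(y, q) = H(x₀, y, p₀, q)` of the cell problem. -/
def cellH {N M k : ℕ} (A : Set (Euc k))
    (f : Euc N → Euc M → Euc k → Euc N) (g : Euc N → Euc M → Euc k → Euc M)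
    (ℓ : Euc N → Euc M → Euc k → ℝ) (x0 p0 : Euc N) : Euc M → Euc M → ℝ :=
  fun y q => Ham A f g ℓ x0 y p0 q

/-- Viscosity subsolution of `u_t + G(x, D_x u) = 0` on `Ω ⊆ ℝ^n × ℝ`. -/
def IsParabSubOn {n : ℕ} (G : Euc n → Euc n → ℝ) (Ω : Set (Euc n × ℝ)) (u : Euc n × ℝ → ℝ) : Prop :=
  UpperSemicontinuousOn u Ω ∧
  ∀ ψ : Euc n × ℝ → ℝ, ContDiff ℝ 1 ψ → ∀ z ∈ Ω,
    IsLocalMaxOn (fun w => u w - ψ w) Ω z →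
    deriv (fun s => ψ (z.1, s)) z.2 + G z.1 (gradient (fun x => ψ (x, z.2)) z.1) ≤ 0

/-- Viscosity supersolution of `u_t + G(x, D_x u) = 0` on `Ω ⊆ ℝ^n × ℝ`. -/
def IsParabSupOn {n : ℕ} (G : Euc n → Euc n → ℝ) (Ω : Set (Euc n × ℝ)) (u : Euc n × ℝ → ℝ) : Prop :=
  LowerSemicontinuousOn u Ω ∧
  ∀ ψ : Euc n × ℝ → ℝ, ContDiff ℝ 1 ψ → ∀ z ∈ Ω,
    IsLocalMinOn (fun w => u w - ψ w) Ω z →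
    0 ≤ deriv (fun s => ψ (z.1, s)) z.2 + G z.1 (gradient (fun x => ψ (x, z.2)) z.1)

/-- Viscosity subsolution of `u_t + H(x, y, D_x u, D_y u / ε) = 0` on `Ω ⊆ (ℝ^N × ℝ^M) × ℝ`. -/
def IsHJSubOn {N M : ℕ} (Hm : Euc N → Euc M → Euc N → Euc M → ℝ) (ε : ℝ)
    (Ω : Set ((Euc N × Euc M) × ℝ)) (u : (Euc N × Euc M) × ℝ → ℝ) : Prop :=
  UpperSemicontinuousOn u Ω ∧
  ∀ ψ : (Euc N × Euc M) × ℝ → ℝ, ContDiff ℝ 1 ψ → ∀ z ∈ Ω,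
    IsLocalMaxOn (fun w => u w - ψ w) Ω z →
    deriv (fun s => ψ (z.1, s)) z.2 +
      Hm z.1.1 z.1.2 (gradient (fun x => ψ ((x, z.1.2), z.2)) z.1.1)
        (ε⁻¹ • gradient (fun y => ψ ((z.1.1, y), z.2)) z.1.2) ≤ 0

/-- Viscosity supersolution of `u_t + H(x, y, D_x u, D_y u / ε) = 0` on `Ω`. -/
def IsHJSupOn {N M : ℕ} (Hm : Euc N → Euc M → Euc N → Euc M → ℝ) (ε : ℝ)
    (Ω : Set ((Euc N × Euc M) × ℝ)) (u : (Euc N × Euc M) × ℝ → ℝ) : Prop :=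
  LowerSemicontinuousOn u Ω ∧
  ∀ ψ : (Euc N × Euc M) × ℝ → ℝ, ContDiff ℝ 1 ψ → ∀ z ∈ Ω,
    IsLocalMinOn (fun w => u w - ψ w) Ω z →
    0 ≤ deriv (fun s => ψ (z.1, s)) z.2 +
      Hm z.1.1 z.1.2 (gradient (fun x => ψ ((x, z.1.2), z.2)) z.1.1)
        (ε⁻¹ • gradient (fun y => ψ ((z.1.1, y), z.2)) z.1.2)

/-- The upper weak semilimit `(limsup^# V^ε)(z)`. -/
def upperLim {Z : Type*} [TopologicalSpace Z] (V : ℝ → Z → ℝ) (z : Z) : ℝ :=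
  sSup { l : ℝ | ∃ (e : ℕ → ℝ) (w : ℕ → Z), (∀ n, 0 < e n) ∧
    Tendsto e atTop (𝓝 0) ∧ Tendsto w atTop (𝓝 z) ∧
    l = Filter.limsup (fun n => V (e n) (w n)) atTop }

/-- The lower weak semilimit `(liminf_# V^ε)(z)`. -/
def lowerLim {Z : Type*} [TopologicalSpace Z] (V : ℝ → Z → ℝ) (z : Z) : ℝ :=
  sInf { l : ℝ | ∃ (e : ℕ → ℝ) (w : ℕ → Z), (∀ n, 0 < e n) ∧
    Tendsto e atTop (𝓝 0) ∧ Tendsto w atTop (𝓝 z) ∧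
    l = Filter.liminf (fun n => V (e n) (w n)) atTop }

/-- The lower semicontinuous envelope `φ_#`. -/
def lscEnvelope {X : Type*} [TopologicalSpace X] (φ : X → ℝ) (x : X) : ℝ :=
  Filter.liminf φ (𝓝 x)

/-- Local equiboundedness of the family of value functions. -/
def LocEquibounded {N M : ℕ} (V : ℝ → Euc N → Euc M → ℝ → ℝ) : Prop :=
  ∀ C : Set (Euc N × Euc M × ℝ), Bornology.IsBounded C →
    ∃ Mb : ℝ, ∀ ε : ℝ, 0 < ε → ∀ z ∈ C, 0 ≤ z.2.2 → |V ε z.1 z.2.1 z.2.2| ≤ Mb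

/-- The sublevel set `Z_b(y)` of a Hamiltonian. -/
def sublevel {m : ℕ} (G : Euc m → Euc m → ℝ) (b : ℝ) (y : Euc m) : Set (Euc m) :=
  { q | G y q ≤ b }

/-- The support function `σ_b(y, v)` of the sublevel `Z_b(y)`. -/
def suppFn {m : ℕ} (G : Euc m → Euc m → ℝ) (b : ℝ) (y v : Euc m) : ℝ :=
  sSup ((fun q => ⟪q, v⟫) '' sublevel G b y)

/-- The intrinsic length of a curve (Lipschitz curves are differentiable a.e.). -/
def intrinsicLen {m : ℕ} (G : Euc m → Euc m → ℝ) (b : ℝ) (ξ : ℝ → Euc m) : ℝ :=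
  ∫ s in (0:ℝ)..1, suppFn G b (ξ s) (deriv ξ s)

/-- Admissible (Lipschitz) curves on `[0,1]` joining `y₁` to `y₂`. -/
def IsAdmCurve {m : ℕ} (ξ : ℝ → Euc m) (y₁ y₂ : Euc m) : Prop :=
  (∃ Kl : NNReal, LipschitzWith Kl ξ) ∧ ξ 0 = y₁ ∧ ξ 1 = y₂

/-- The intrinsic distance `S_b(y₁, y₂)`. -/
def intrinsicDist {m : ℕ} (G : Euc m → Euc m → ℝ) (b : ℝ) (y₁ y₂ : Euc m) : ℝ :=
  sInf { L : ℝ | ∃ ξ : ℝ → Euc m, IsAdmCurve ξ y₁ y₂ ∧ L = intrinsicLen G b ξ }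

/-- The weighted intrinsic length associated with a weight `h`. -/
def wIntrinsicLen {m : ℕ} (G : Euc m → Euc m → ℝ) (b : ℝ) (h : Euc m → ℝ) (ξ : ℝ → Euc m) : ℝ :=
  ∫ s in (0:ℝ)..1, h (ξ s) * suppFn G b (ξ s) (deriv ξ s)

/-- The weighted intrinsic distance `S_b^h(y₁, y₂)`. -/
def wIntrinsicDist {m : ℕ} (G : Euc m → Euc m → ℝ) (b : ℝ) (h : Euc m → ℝ) (y₁ y₂ : Euc m) : ℝ :=
  sInf { L : ℝ | ∃ ξ : ℝ → Euc m, IsAdmCurve ξ y₁ y₂ ∧ L = wIntrinsicLen G b h ξ }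

/-- The intrinsic critical distance `S(y₁, y₂)` of the cell problem at `(x₀, p₀)`. -/
def cellS {N M k : ℕ} (A : Set (Euc k))
    (f : Euc N → Euc M → Euc k → Euc N) (g : Euc N → Euc M → Euc k → Euc M)
    (ℓ : Euc N → Euc M → Euc k → ℝ) (x0 p0 : Euc N) (y₁ y₂ : Euc M) : ℝ :=
  intrinsicDist (cellH A f g ℓ x0 p0) (effH A f g ℓ x0 p0) y₁ y₂

/-- The Aubry set of `G` at the level `c`: points near which no global viscosity
subsolution of `G(y, Du) = c` is strict. -/
def AubrySet {m : ℕ} (G : Euc m → Euc m → ℝ) (c : ℝ) : Set (Euc m) :=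
  { y₀ | ¬ ∃ (u : Euc m → ℝ) (δ : ℝ) (U : Set (Euc m)),
      IsVSubOn G c univ u ∧ 0 < δ ∧ IsOpen U ∧ y₀ ∈ U ∧ IsVSubOn G (c - δ) U u }

end

/-!
Concatenating pieces on which the control is constant produces trajectories of (CD_ε) whose costs
and endpoints depend continuously on `ε` and on the initial point, also at `ε = 0`, where the slow
variable is frozen. By (H3) such words steer the fast variable between any two points of a ball in a
time independent of small `ε`; the resulting words of bounded cost make the value functions locally
bounded and their upper semilimit independent of the fast variable.

If `V̄ - ψ` had a local maximum at `(x, t)` with `ψ_t + H̄(x, D_x ψ) > 0`, pick `b` with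
`-ψ_t < b < H̄(x, p)`, where `p = D_x ψ (x, t)`. Were the infimum over all words of the integral of
`ℓ + p · f + b` along the frozen dynamics finite at every `y`, it would be a subsolution of
`H(x, y, p, Du) = b`, which is impossible. So from some `y` there are words of arbitrarily negative
cost. Such a word can be cut at a time when its running cost is nonpositive, hence, by coercivity,
in a fixed compact set, and closed up by a steering word to a loop of cost below `-1`. The loop
persists for small `ε`. About `1 / ε` successive loops increase `V^ε - ψ` by an amount independent
of `ε` while the slow variables stay near `(x, t)`, which contradicts the maximality.
-/

section Concatenation

variable {E : Type*} {s r : ℝ}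

/-- The concatenation of two curves: follow `γ₁` up to time `s`, then restart `γ₂` from its
time `0`. -/
noncomputable def concat (s : ℝ) (γ₁ γ₂ : ℝ → E) (t : ℝ) : E :=
  if t ≤ s then γ₁ t else γ₂ (t - s)

lemma concat_of_le {γ₁ γ₂ : ℝ → E} (h : r ≤ s) : concat s γ₁ γ₂ r = γ₁ r := if_pos h

lemma concat_of_lt {γ₁ γ₂ : ℝ → E} (h : s < r) : concat s γ₁ γ₂ r = γ₂ (r - s) :=
  if_neg h.not_ge

lemma concat_of_ge {γ₁ γ₂ : ℝ → E} (hγ : γ₁ s = γ₂ 0) (h : s ≤ r) :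
    concat s γ₁ γ₂ r = γ₂ (r - s) := by
  rcases h.eq_or_lt with rfl | h
  · rw [concat_of_le le_rfl, hγ, sub_self]
  · exact concat_of_lt h

lemma measurable_concat [MeasurableSpace E] {γ₁ γ₂ : ℝ → E} (h₁ : Measurable γ₁)
    (h₂ : Measurable γ₂) : Measurable (concat s γ₁ γ₂) :=
  Measurable.ite measurableSet_Iic h₁ (h₂.comp (measurable_id.sub_const s))

variable [NormedAddCommGroup E] {F₁ F₂ : ℝ → E}

lemma intervalIntegrable_concat_of_le (hr : 0 ≤ r) (hrs : r ≤ s)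
    (h₁ : IntervalIntegrable F₁ volume 0 r) :
    IntervalIntegrable (concat s F₁ F₂) volume 0 r :=
  h₁.congr fun _ ht ↦ (concat_of_le ((uIoc_of_le hr ▸ ht).2.trans hrs)).symm

lemma intervalIntegrable_concat_of_ge (hsr : s ≤ r)
    (h₂ : IntervalIntegrable F₂ volume 0 (r - s)) :
    IntervalIntegrable (concat s F₁ F₂) volume s r := by
  have h := h₂.comp_sub_right s
  rw [zero_add, sub_add_cancel] at h
  exact h.congr fun _ ht ↦ (concat_of_lt (uIoc_of_le hsr ▸ ht).1).symm

lemma intervalIntegrable_concat (hs : 0 ≤ s) (hsr : s ≤ r)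
    (h₁ : IntervalIntegrable F₁ volume 0 s) (h₂ : IntervalIntegrable F₂ volume 0 (r - s)) :
    IntervalIntegrable (concat s F₁ F₂) volume 0 r :=
  (intervalIntegrable_concat_of_le hs le_rfl h₁).trans (intervalIntegrable_concat_of_ge hsr h₂)

variable [NormedSpace ℝ E]

lemma integral_concat_of_le (hr : 0 ≤ r) (hrs : r ≤ s) :
    ∫ t in 0..r, concat s F₁ F₂ t = ∫ t in 0..r, F₁ t :=
  intervalIntegral.integral_congr fun _ ht ↦ concat_of_le ((uIcc_of_le hr ▸ ht).2.trans hrs)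

lemma integral_concat (hs : 0 ≤ s) (hsr : s ≤ r)
    (h₁ : IntervalIntegrable F₁ volume 0 s) (h₂ : IntervalIntegrable F₂ volume 0 (r - s)) :
    ∫ t in 0..r, concat s F₁ F₂ t = (∫ t in 0..s, F₁ t) + ∫ t in 0..(r - s), F₂ t := by
  rw [← intervalIntegral.integral_add_adjacent_intervals
    (intervalIntegrable_concat_of_le hs le_rfl h₁) (intervalIntegrable_concat_of_ge hsr h₂),
    integral_concat_of_le hs le_rfl, ← sub_self s, ← intervalIntegral.integral_comp_sub_right]
  congr 1
  refine intervalIntegral.integral_congr_ae (Eventually.of_forall fun t ht ↦ ?_)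
  exact concat_of_lt (uIoc_of_le hsr ▸ ht).1

lemma concat_eq_add_smul_integral {γ₁ γ₂ : ℝ → E} {c : ℝ} (hs : 0 ≤ s) (hγ : γ₁ s = γ₂ 0)
    (hF₁ : ∀ t, 0 ≤ t → IntervalIntegrable F₁ volume 0 t)
    (hF₂ : ∀ t, 0 ≤ t → IntervalIntegrable F₂ volume 0 t)
    (h₁ : ∀ t, 0 ≤ t → γ₁ t = γ₁ 0 + c • ∫ u in 0..t, F₁ u)
    (h₂ : ∀ t, 0 ≤ t → γ₂ t = γ₂ 0 + c • ∫ u in 0..t, F₂ u) {t : ℝ} (ht : 0 ≤ t) :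
    concat s γ₁ γ₂ t = concat s γ₁ γ₂ 0 + c • ∫ u in 0..t, concat s F₁ F₂ u := by
  rw [concat_of_le hs]
  rcases le_total t s with hts | hst
  · rw [concat_of_le hts, integral_concat_of_le ht hts, h₁ t ht]
  · rw [concat_of_ge hγ hst, integral_concat hs hst (hF₁ s hs) (hF₂ _ (sub_nonneg.2 hst)),
      smul_add, ← add_assoc, ← h₁ s hs, hγ, ← h₂ _ (sub_nonneg.2 hst)]

end Concatenation

section Semiflow

variable {E : Type*} [NormedAddCommGroup E] [NormedSpace ℝ E]
  {v w : E → E} {K : NNReal} {z z' : E} {t T : ℝ}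

lemma isIntegralCurveOn_union {γ : ℝ → E} {u : ℝ → E → E} {S₁ S₂ : Set ℝ}
    (hS₁ : IsClosed S₁) (hS₂ : IsClosed S₂) (h₁ : IsIntegralCurveOn γ u S₁)
    (h₂ : IsIntegralCurveOn γ u S₂) : IsIntegralCurveOn γ u (S₁ ∪ S₂) := by
  have hderiv : ∀ S, IsClosed S → IsIntegralCurveOn γ u S →
      ∀ t, HasDerivWithinAt γ (u t (γ t)) S t := fun S hS h t ↦ by
    by_cases ht : t ∈ S
    · exact h t ht
    · exact HasFDerivWithinAt.of_notMem_closure (hS.closure_eq.symm ▸ ht)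
  exact fun t _ ↦ (hderiv S₁ hS₁ h₁ t).union (hderiv S₂ hS₂ h₂ t)

lemma isIntegralCurveOn_concat {γ₁ γ₂ : ℝ → E} {s : ℝ} (hs : 0 ≤ s) (hT : 0 ≤ T)
    (h₁ : IsIntegralCurveOn γ₁ (fun _ ↦ v) (Icc 0 s))
    (h₂ : IsIntegralCurveOn γ₂ (fun _ ↦ v) (Icc 0 T)) (hγ : γ₁ s = γ₂ 0) :
    IsIntegralCurveOn (concat s γ₁ γ₂) (fun _ ↦ v) (Icc 0 (s + T)) := by
  rw [← Icc_union_Icc_eq_Icc hs (le_add_of_nonneg_right hT)]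
  refine isIntegralCurveOn_union isClosed_Icc isClosed_Icc (fun t ht ↦ ?_) fun t ht ↦ ?_
  · rw [concat_of_le ht.2]
    exact (h₁ t ht).congr_of_mem (fun r hr ↦ concat_of_le hr.2) ht
  · have h : IsIntegralCurveOn (γ₂ ∘ (· - s)) (fun _ ↦ v) (Icc s (s + T)) := by
      simpa [← image_vadd, Function.comp_def, add_comm] using h₂.comp_sub s
    rw [concat_of_ge hγ ht.1]
    exact (h t ht).congr_of_mem (fun r hr ↦ concat_of_ge hγ hr.1) ht

lemma hasDerivWithinAt_Ici_of_isIntegralCurveOn_Icc {γ : ℝ → E}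
    (h : IsIntegralCurveOn γ (fun _ ↦ v) (Icc 0 T)) (ht : t ∈ Ico 0 T) :
    HasDerivWithinAt γ (v (γ t)) (Ici t) t :=
  (h t ⟨ht.1, ht.2.le⟩).mono_of_mem_nhdsWithin (Icc_mem_nhdsGE_of_mem ht)

lemma eqOn_of_isIntegralCurveOn_Icc (hv : LipschitzWith K v) {γ₁ γ₂ : ℝ → E}
    (h₁ : IsIntegralCurveOn γ₁ (fun _ ↦ v) (Icc 0 T))
    (h₂ : IsIntegralCurveOn γ₂ (fun _ ↦ v) (Icc 0 T)) (h0 : γ₁ 0 = γ₂ 0) :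
    EqOn γ₁ γ₂ (Icc 0 T) :=
  ODE_solution_unique_of_mem_Icc_right (v := fun _ ↦ v) (s := fun _ ↦ univ) (K := K)
    (fun _ _ ↦ hv.lipschitzOnWith)
    h₁.continuousOn (fun _ ht ↦ hasDerivWithinAt_Ici_of_isIntegralCurveOn_Icc h₁ ht)
    (fun _ _ ↦ mem_univ _)
    h₂.continuousOn (fun _ ht ↦ hasDerivWithinAt_Ici_of_isIntegralCurveOn_Icc h₂ ht)
    (fun _ _ ↦ mem_univ _) h0

omit [NormedSpace ℝ E] in
lemma isPicardLindelof_of_lipschitzWith (hv : LipschitzWith K v) (z : E) :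
    IsPicardLindelof (fun _ ↦ v) (tmin := 0) (tmax := 1 / (K + 1))
      ⟨0, le_rfl, by positivity⟩ z (‖v z‖₊ + 1) 0 (‖v z‖₊ + K * (‖v z‖₊ + 1)) K := by
  refine .of_time_independent (fun x hx ↦ ?_) hv.lipschitzOnWith ?_
  · calc ‖v x‖ ≤ ‖v z‖ + ‖v x - v z‖ := norm_le_norm_add_norm_sub' _ _
      _ ≤ ‖v z‖ + K * ‖x - z‖ := by gcongr; exact hv.norm_sub_le x z
      _ ≤ ‖v z‖ + K * (‖v z‖ + 1) := by gcongr; exact mem_closedBall_iff_norm.1 hx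
  · have hK : (0 : ℝ) ≤ 1 / (K + 1) := by positivity
    simp only [sub_zero, sub_self, NNReal.coe_zero, max_eq_left hK, NNReal.coe_add,
      NNReal.coe_mul, NNReal.coe_one, coe_nnnorm]
    rw [mul_one_div, div_le_iff₀ (by positivity)]
    nlinarith [norm_nonneg (v z), K.coe_nonneg]

variable [CompleteSpace E]

lemma exists_isIntegralCurveOn_Icc (hv : LipschitzWith K v) (z : E) (T : ℝ) :
    ∃ γ : ℝ → E, γ 0 = z ∧ IsIntegralCurveOn γ (fun _ ↦ v) (Icc 0 T) := by
  set h : ℝ := 1 / (K + 1)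
  have hh : 0 < h := by positivity
  have local_solution (z : E) : ∃ γ : ℝ → E, γ 0 = z ∧
      IsIntegralCurveOn γ (fun _ ↦ v) (Icc 0 h) :=
    (isPicardLindelof_of_lipschitzWith hv z).exists_eq_forall_mem_Icc_hasDerivWithinAt₀
  have solution_upto (n : ℕ) : ∀ z : E, ∃ γ : ℝ → E, γ 0 = z ∧
      IsIntegralCurveOn γ (fun _ ↦ v) (Icc 0 (n * h)) := by
    induction n with
    | zero => exact fun z ↦ (local_solution z).imp fun γ hγ ↦
        ⟨hγ.1, hγ.2.mono (Icc_subset_Icc_right (by simpa using hh.le))⟩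
    | succ n ih =>
      intro z
      obtain ⟨γ₁, rfl, h₁⟩ := local_solution z
      obtain ⟨γ₂, h0, h₂⟩ := ih (γ₁ h)
      refine ⟨concat h γ₁ γ₂, concat_of_le hh.le, ?_⟩
      rw [Nat.cast_succ, add_mul, one_mul, add_comm]
      exact isIntegralCurveOn_concat hh.le (by positivity) h₁ h₂ h0.symm
  obtain ⟨n, hn⟩ := exists_nat_ge (T / h)
  obtain ⟨γ, h0, hγ⟩ := solution_upto n z
  exact ⟨γ, h0, hγ.mono (Icc_subset_Icc_right ((div_le_iff₀ hh).1 hn))⟩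

theorem exists_isIntegralCurveOn_Ici (hv : LipschitzWith K v) (z : E) :
    ∃ γ : ℝ → E, γ 0 = z ∧ IsIntegralCurveOn γ (fun _ ↦ v) (Ici 0) := by
  choose G hG0 hG using exists_isIntegralCurveOn_Icc hv z
  have hGG {S T : ℝ} (hST : S ≤ T) : EqOn (G S) (G T) (Icc 0 S) :=
    eqOn_of_isIntegralCurveOn_Icc hv (hG S) ((hG T).mono (Icc_subset_Icc_right hST))
      (by rw [hG0, hG0])
  have heq (T : ℝ) : EqOn (fun t ↦ G t t) (G T) (Icc 0 T) :=
    fun t ht ↦ hGG ht.2 ⟨ht.1, le_rfl⟩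
  refine ⟨fun t ↦ G t t, hG0 0, fun t ht ↦ ?_⟩
  have ht' : t ∈ Icc 0 (t + 1) := ⟨ht, by linarith⟩
  have hd : HasDerivWithinAt (fun t ↦ G t t) (v (G (t + 1) t)) (Icc 0 (t + 1)) t :=
    (hG (t + 1) t ht').congr_of_mem (heq (t + 1)) ht'
  rw [← heq (t + 1) ht'] at hd
  refine hd.mono_of_mem_nhdsWithin ?_
  filter_upwards [self_mem_nhdsWithin, nhdsWithin_le_nhds (Iio_mem_nhds (lt_add_one t))] with s hs
    hs' using ⟨hs, hs'.le⟩

/-- The forward flow at time `t` of a Lipschitz vector field `v` on a Banach space. It is constant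
on negative times, which makes it globally continuous. -/
noncomputable def semiflow (v : E → E) (z : E) (t : ℝ) : E :=
  Classical.epsilon (fun γ : ℝ → E ↦ γ 0 = z ∧ IsIntegralCurveOn γ (fun _ ↦ v) (Ici 0)) (max t 0)

lemma exists_semiflow_eq (hv : LipschitzWith K v) (z : E) :
    ∃ γ : ℝ → E, (γ 0 = z ∧ IsIntegralCurveOn γ (fun _ ↦ v) (Ici 0)) ∧
      semiflow v z = fun t ↦ γ (max t 0) :=
  ⟨_, Classical.epsilon_spec (exists_isIntegralCurveOn_Ici hv z), rfl⟩

lemma semiflow_zero (hv : LipschitzWith K v) (z : E) : semiflow v z 0 = z := by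
  obtain ⟨γ, ⟨h0, -⟩, h⟩ := exists_semiflow_eq hv z
  simp only [h, max_self, h0]

lemma continuous_semiflow (hv : LipschitzWith K v) (z : E) : Continuous (semiflow v z) := by
  obtain ⟨γ, ⟨-, hγ⟩, h⟩ := exists_semiflow_eq hv z
  rw [h]
  exact hγ.continuousOn.comp_continuous (by fun_prop) fun t ↦ le_max_right t 0

lemma hasDerivWithinAt_semiflow (hv : LipschitzWith K v) (z : E) (ht : 0 ≤ t) :
    HasDerivWithinAt (semiflow v z) (v (semiflow v z t)) (Ici t) t := by
  obtain ⟨γ, ⟨-, hγ⟩, h⟩ := exists_semiflow_eq hv z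
  have hγt (s) (hs : s ∈ Ici t) : semiflow v z s = γ s := by
    simp only [h, max_eq_left (ht.trans hs)]
  rw [hγt t self_mem_Ici]
  exact ((hγ t ht).mono (Ici_subset_Ici.2 ht)).congr_of_mem hγt self_mem_Ici

lemma map_semiflow_eq_add_integral {F : Type*} [NormedAddCommGroup F] [NormedSpace ℝ F]
    [CompleteSpace F] (hv : LipschitzWith K v) (φ : E →L[ℝ] F) (z : E) (ht : 0 ≤ t) :
    φ (semiflow v z t) = φ z + ∫ s in 0..t, φ (v (semiflow v z s)) := by
  have hγ := continuous_semiflow hv z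
  have hφ (s) (hs : s ∈ Ioo (min 0 t) (max 0 t)) : HasDerivWithinAt (fun s ↦ φ (semiflow v z s))
      (φ (v (semiflow v z s))) (Ioi s) s := by
    rw [min_eq_left ht] at hs
    exact φ.hasFDerivAt.comp_hasDerivWithinAt s
      ((hasDerivWithinAt_semiflow hv z hs.1.le).mono Ioi_subset_Ici_self)
  have hcont : Continuous fun s ↦ φ (v (semiflow v z s)) :=
    φ.continuous.comp (hv.continuous.comp hγ)
  rw [intervalIntegral.integral_eq_sub_of_hasDeriv_right (φ.continuous.comp hγ).continuousOn hφ
    (hcont.intervalIntegrable 0 t), Function.comp_apply, Function.comp_apply, semiflow_zero hv,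
    add_sub_cancel]

lemma norm_map_semiflow_sub_le {F : Type*} [NormedAddCommGroup F] [NormedSpace ℝ F]
    [CompleteSpace F] (hv : LipschitzWith K v) {φ : E →L[ℝ] F} {C : ℝ} (hC : ∀ z, ‖φ (v z)‖ ≤ C)
    (z : E) (ht : 0 ≤ t) : ‖φ (semiflow v z t) - φ z‖ ≤ C * t := by
  rw [map_semiflow_eq_add_integral hv φ z ht, add_sub_cancel_left]
  simpa [abs_of_nonneg ht] using
    intervalIntegral.norm_integral_le_of_norm_le_const (a := 0) (b := t) fun s _ ↦
      hC (semiflow v z s)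

lemma dist_semiflow_le {K' : NNReal} (hv : LipschitzWith K' v) (hw : LipschitzWith K w) {δ : ℝ}
    (hδ : 0 ≤ δ) (hvw : ∀ z, dist (v z) (w z) ≤ δ) (z z' : E) (ht : 0 ≤ t) :
    dist (semiflow v z t) (semiflow w z' t) ≤ (dist z z' + δ) * Real.exp ((K + 1) * t) := by
  have gronwall := dist_le_of_approx_trajectories_ODE (v := fun _ ↦ w) (K := K + 1) (a := 0)
    (b := t) (f := semiflow v z) (g := semiflow w z') (δ := dist z z') (εf := δ) (εg := 0)
    (fun _ ↦ hw.weaken le_self_add)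
    (continuous_semiflow hv z).continuousOn (fun s hs ↦ hasDerivWithinAt_semiflow hv z hs.1)
    (fun s _ ↦ hvw _)
    (continuous_semiflow hw z').continuousOn (fun s hs ↦ hasDerivWithinAt_semiflow hw z' hs.1)
    (fun s _ ↦ by simp) (by rw [semiflow_zero hv, semiflow_zero hw]) t ⟨ht, le_rfl⟩
  have hK : (1 : ℝ) ≤ K + 1 := by simp
  rw [gronwallBound_of_K_ne_0 (by positivity), NNReal.coe_add, NNReal.coe_one, sub_zero,
    add_zero] at gronwall
  have hexp : 1 ≤ Real.exp ((K + 1) * t) := Real.one_le_exp (by positivity)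
  have hdiv : δ / (K + 1) * (Real.exp ((K + 1) * t) - 1) ≤ δ * Real.exp ((K + 1) * t) := by
    gcongr
    · exact div_le_self hδ hK
    · linarith
  linarith

lemma norm_semiflow_sub_le (hv : LipschitzWith K v) (z : E) (ht : 0 ≤ t)
    (htK : (K + 1) * t ≤ 1) : ‖semiflow v z t - z‖ ≤ 2 * ‖v z‖ * t := by
  have gronwall := dist_le_of_approx_trajectories_ODE (v := fun _ ↦ v) (K := K + 1) (a := 0)
    (b := t) (f := semiflow v z) (g := fun _ ↦ z) (δ := 0) (εf := 0) (εg := ‖v z‖)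
    (fun _ ↦ hv.weaken le_self_add)
    (continuous_semiflow hv z).continuousOn (fun s hs ↦ hasDerivWithinAt_semiflow hv z hs.1)
    (fun s _ ↦ by simp) continuousOn_const (fun s _ ↦ hasDerivWithinAt_const s _ z)
    (fun s _ ↦ by simp) (by rw [semiflow_zero hv, dist_self]) t ⟨ht, le_rfl⟩
  have hK : (0 : ℝ) < K + 1 := by positivity
  rw [gronwallBound_of_K_ne_0 (by positivity), NNReal.coe_add, NNReal.coe_one, sub_zero,
    zero_add, dist_eq_norm] at gronwall
  simp only [zero_mul, zero_add] at gronwall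
  have hexp : Real.exp ((K + 1) * t) - 1 ≤ 2 * ((K + 1) * t) := by
    have h0 : 0 ≤ (K + 1) * t := by positivity
    simpa [abs_of_nonneg h0] using (le_abs_self _).trans
      (Real.abs_exp_sub_one_le ((abs_of_nonneg h0).trans_le htK))
  calc ‖semiflow v z t - z‖ ≤ ‖v z‖ / (K + 1) * (Real.exp ((K + 1) * t) - 1) := gronwall
    _ ≤ ‖v z‖ / (K + 1) * (2 * ((K + 1) * t)) := by gcongr
    _ = 2 * ‖v z‖ * t := by field_simp

lemma norm_semiflow_sub_sub_smul_le (hv : LipschitzWith K v) (z : E) (ht : 0 ≤ t)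
    (htK : (K + 1) * t ≤ 1) :
    ‖semiflow v z t - z - t • v z‖ ≤ 2 * K * ‖v z‖ * t ^ 2 := by
  have hint : semiflow v z t - z - t • v z = ∫ s in 0..t, (v (semiflow v z s) - v z) := by
    have hcont : Continuous fun s ↦ v (semiflow v z s) :=
      hv.continuous.comp (continuous_semiflow hv z)
    rw [intervalIntegral.integral_sub (hcont.intervalIntegrable 0 t)
      intervalIntegrable_const, intervalIntegral.integral_const, sub_zero]
    have h := map_semiflow_eq_add_integral hv (.id ℝ E) z ht
    simp only [ContinuousLinearMap.id_apply] at h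
    rw [h, add_sub_cancel_left]
  rw [hint]
  refine (intervalIntegral.norm_integral_le_of_norm_le_const
    (C := K * (2 * ‖v z‖ * t)) fun s hs ↦ ?_).trans_eq ?_
  · rw [uIoc_of_le ht] at hs
    have hs0 : 0 ≤ s := hs.1.le
    calc ‖v (semiflow v z s) - v z‖ ≤ K * ‖semiflow v z s - z‖ := hv.norm_sub_le _ _
      _ ≤ K * (2 * ‖v z‖ * s) := by
        gcongr
        exact norm_semiflow_sub_le hv z hs0 (le_trans (by gcongr; exact hs.2) htK)
      _ ≤ K * (2 * ‖v z‖ * t) := by gcongr; exact hs.2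
  · rw [sub_zero, abs_of_nonneg ht]
    ring

lemma continuous_semiflow_of_parametrized {P : Type*} [PseudoMetricSpace P] {v : P → E → E}
    {K : P → NNReal} (hv : ∀ p, LipschitzWith (K p) (v p)) {C : ℝ} (hC : 0 ≤ C)
    (hvC : ∀ p q z, dist (v p z) (v q z) ≤ C * dist p q) :
    Continuous fun x : P × E × ℝ ↦ semiflow (v x.1) x.2.1 x.2.2 := by
  have semiflow_max (p z t) : semiflow (v p) z (max t 0) = semiflow (v p) z t := by simp [semiflow]
  refine continuous_iff_continuousAt.2 fun x₀ ↦ ?_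
  have bound (x : P × E × ℝ) : dist (semiflow (v x.1) x.2.1 x.2.2) (semiflow (v x₀.1) x₀.2.1 x₀.2.2)
      ≤ (dist x.2.1 x₀.2.1 + C * dist x.1 x₀.1) * Real.exp ((K x₀.1 + 1) * max x.2.2 0)
        + dist (semiflow (v x₀.1) x₀.2.1 x.2.2) (semiflow (v x₀.1) x₀.2.1 x₀.2.2) := by
    refine (dist_triangle _ (semiflow (v x₀.1) x₀.2.1 x.2.2) _).trans ?_
    gcongr
    rw [← semiflow_max, ← semiflow_max x₀.1]
    exact dist_semiflow_le (hv _) (hv _) (by positivity) (fun z ↦ hvC _ _ z) _ _ (le_max_right _ _)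
  refine tendsto_iff_dist_tendsto_zero.2 (squeeze_zero (fun _ ↦ dist_nonneg) bound ?_)
  have hcont := continuous_semiflow (hv x₀.1) x₀.2.1
  have : Continuous fun x : P × E × ℝ ↦
      (dist x.2.1 x₀.2.1 + C * dist x.1 x₀.1) * Real.exp ((K x₀.1 + 1) * max x.2.2 0)
        + dist (semiflow (v x₀.1) x₀.2.1 x.2.2) (semiflow (v x₀.1) x₀.2.1 x₀.2.2) := by
    fun_prop
  simpa using this.tendsto x₀

end Semiflow

/-- A piecewise constant control: a list of control values, each applied for a given time. -/
abbrev ControlWord (ι : Type*) := List (ι × NNReal)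

namespace ControlWord

variable {ι E : Type*}

/-- The total time during which a word acts. -/
def duration : ControlWord ι → ℝ
  | [] => 0
  | l :: w => l.2 + duration w

lemma duration_nonneg (w : ControlWord ι) : 0 ≤ duration w := by
  induction w with
  | nil => exact le_rfl
  | cons l w ih => exact add_nonneg l.2.2 ih

lemma duration_append (w w' : ControlWord ι) :
    duration (w ++ w') = duration w + duration w' := by
  induction w with
  | nil => simp [duration]
  | cons l w ih => simp only [List.cons_append, duration, ih, add_assoc]

variable [NormedAddCommGroup E] [NormedSpace ℝ E]

/-- The point reached from `z` by the trajectory that a word drives through the vector fields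
`v i`. -/
noncomputable def endpoint (v : ι → E → E) : ControlWord ι → E → E
  | [], z => z
  | l :: w, z => endpoint v w (semiflow (v l.1) z l.2)

/-- The integral of the running cost `L` along the trajectory driven by a word. -/
noncomputable def cost (v : ι → E → E) (L : ι → E → ℝ) : ControlWord ι → E → ℝ
  | [], _ => 0
  | l :: w, z => (∫ s in 0..(l.2 : ℝ), L l.1 (semiflow (v l.1) z s)) +
      cost v L w (semiflow (v l.1) z l.2)

/-- The whole trajectory driven by a word from `z` lies in `S`. -/
def StaysIn (v : ι → E → E) (S : Set E) : ControlWord ι → E → Prop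
  | [], z => z ∈ S
  | l :: w, z => (∀ s ∈ Icc (0 : ℝ) l.2, semiflow (v l.1) z s ∈ S) ∧
      StaysIn v S w (semiflow (v l.1) z l.2)

variable {v : ι → E → E} {L L' : ι → E → ℝ} {S : Set E}

lemma endpoint_append (w w' : ControlWord ι) (z : E) :
    endpoint v (w ++ w') z = endpoint v w' (endpoint v w z) := by
  induction w generalizing z with
  | nil => rfl
  | cons l w ih => simp only [List.cons_append, endpoint, ih]

lemma cost_append (w w' : ControlWord ι) (z : E) :
    cost v L (w ++ w') z = cost v L w z + cost v L w' (endpoint v w z) := by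
  induction w generalizing z with
  | nil => simp [cost, endpoint]
  | cons l w ih => simp only [List.cons_append, cost, endpoint, ih, add_assoc]

lemma cost_const_mul (c : ℝ) (w : ControlWord ι) (z : E) :
    cost v (fun i z ↦ c * L i z) w z = c * cost v L w z := by
  induction w generalizing z with
  | nil => simp [cost]
  | cons l w ih => simp only [cost, ih, mul_add, intervalIntegral.integral_const_mul]

lemma cost_const (c : ℝ) (w : ControlWord ι) (z : E) :
    cost v (fun _ _ ↦ c) w z = c * duration w := by
  induction w generalizing z with
  | nil => simp [cost, duration]
  | cons l w ih =>
    simp only [cost, duration, ih, intervalIntegral.integral_const, sub_zero, smul_eq_mul]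
    ring

section Parametrized

variable {P : Type*} [TopologicalSpace P] {v : P → ι → E → E}
  (hv : ∀ i, Continuous fun x : P × E × ℝ ↦ semiflow (v x.1 i) x.2.1 x.2.2)
include hv

lemma continuous_endpoint (w : ControlWord ι) :
    Continuous fun x : P × E ↦ endpoint (v x.1) w x.2 := by
  induction w with
  | nil => exact continuous_snd
  | cons l w ih =>
    have hl : Continuous fun x : P × E ↦ semiflow (v x.1 l.1) x.2 l.2 :=
      (hv l.1).comp (by fun_prop : Continuous fun x : P × E ↦ (x.1, x.2, (l.2 : ℝ)))
    exact ih.comp (continuous_fst.prodMk hl)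

lemma continuous_cost (hL : ∀ i, Continuous (L i)) (w : ControlWord ι) :
    Continuous fun x : P × E ↦ cost (v x.1) L w x.2 := by
  induction w with
  | nil => exact continuous_const
  | cons l w ih =>
    have hl : Continuous fun x : P × E ↦ semiflow (v x.1 l.1) x.2 l.2 :=
      (hv l.1).comp (by fun_prop : Continuous fun x : P × E ↦ (x.1, x.2, (l.2 : ℝ)))
    have hLl : Continuous (Function.uncurry fun (x : P × E) (s : ℝ) ↦
        L l.1 (semiflow (v x.1 l.1) x.2 s)) :=
      (hL l.1).comp ((hv l.1).comp
        (by fun_prop : Continuous fun x : (P × E) × ℝ ↦ (x.1.1, x.1.2, x.2)))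
    exact (intervalIntegral.continuous_parametric_intervalIntegral_of_continuous' hLl _ _).add
      (ih.comp (continuous_fst.prodMk hl))

end Parametrized

variable [CompleteSpace E]

lemma norm_map_endpoint_sub_le {F : Type*} [NormedAddCommGroup F] [NormedSpace ℝ F]
    [CompleteSpace F] {K : NNReal} (hv : ∀ i, LipschitzWith K (v i)) {φ : E →L[ℝ] F} {C : ℝ}
    (hC : ∀ i z, ‖φ (v i z)‖ ≤ C) (w : ControlWord ι) (z : E) :
    ‖φ (endpoint v w z) - φ z‖ ≤ C * duration w := by
  induction w generalizing z with
  | nil => simp [endpoint, duration]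
  | cons l w ih =>
    calc ‖φ (endpoint v (l :: w) z) - φ z‖
        ≤ ‖φ (endpoint v w (semiflow (v l.1) z l.2)) - φ (semiflow (v l.1) z l.2)‖
          + ‖φ (semiflow (v l.1) z l.2) - φ z‖ := norm_sub_le_norm_sub_add_norm_sub _ _ _
      _ ≤ C * duration w + C * l.2 :=
        add_le_add (ih _) (norm_map_semiflow_sub_le (hv l.1) (hC l.1) z l.2.2)
      _ = C * duration (l :: w) := by simp only [duration]; ring

lemma cost_map_eq_sub {K : NNReal} (hv : ∀ i, LipschitzWith K (v i)) (φ : E →L[ℝ] ℝ)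
    (w : ControlWord ι) (z : E) :
    cost v (fun i z ↦ φ (v i z)) w z = φ (endpoint v w z) - φ z := by
  induction w generalizing z with
  | nil => simp [cost, endpoint]
  | cons l w ih =>
    have hl := map_semiflow_eq_add_integral (hv l.1) φ z l.2.2
    simp only [cost, endpoint, ih, NNReal.val_eq_coe] at hl ⊢
    linarith

section Continuous

variable {K : NNReal} (hv : ∀ i, LipschitzWith K (v i)) (hL : ∀ i, Continuous (L i))
include hv hL

lemma intervalIntegrable_cost (i : ι) (z : E) (a b : ℝ) :
    IntervalIntegrable (fun s ↦ L i (semiflow (v i) z s)) volume a b :=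
  ((hL i).comp (continuous_semiflow (hv i) z)).intervalIntegrable a b

lemma cost_add (hL' : ∀ i, Continuous (L' i)) (w : ControlWord ι) (z : E) :
    cost v (fun i z ↦ L i z + L' i z) w z = cost v L w z + cost v L' w z := by
  induction w generalizing z with
  | nil => simp [cost]
  | cons l w ih =>
    simp only [cost, ih]
    rw [intervalIntegral.integral_add (intervalIntegrable_cost hv hL _ _ _ _)
      (intervalIntegrable_cost hv hL' _ _ _ _)]
    ring

lemma cost_le_of_staysIn {C : ℝ} (hC : ∀ i, ∀ z ∈ S, L i z ≤ C) {w : ControlWord ι} {z : E}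
    (h : StaysIn v S w z) : cost v L w z ≤ C * duration w := by
  induction w generalizing z with
  | nil => simp [cost, duration]
  | cons l w ih =>
    have hl : ∫ s in 0..(l.2 : ℝ), L l.1 (semiflow (v l.1) z s) ≤ ∫ _ in 0..(l.2 : ℝ), C :=
      intervalIntegral.integral_mono_on l.2.2 (intervalIntegrable_cost hv hL _ _ _ _)
        intervalIntegrable_const fun s hs ↦ hC _ _ (h.1 s hs)
    rw [intervalIntegral.integral_const, sub_zero, smul_eq_mul] at hl
    simp only [cost, duration]
    linarith [ih h.2]

end Continuous

end ControlWord

open ControlWord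

/-- Assumptions (H1)–(H4): the control set `A` is compact, the dynamics are uniformly Lipschitz with
bounded slow component, the fast variable is locally controllable, and the running cost is
continuous and coercive in the fast variable. -/
structure IsControlSystem {N M k : ℕ} (A : Set (Euc k))
    (f : Euc N → Euc M → Euc k → Euc N) (g : Euc N → Euc M → Euc k → Euc M)
    (ℓ : Euc N → Euc M → Euc k → ℝ) (L : NNReal) (Q : ℝ) : Prop where
  isCompact : IsCompact A
  nonempty : A.Nonempty
  fst_lipschitz : ∀ (x₁ x₂ : Euc N) (y₁ y₂ : Euc M), ∀ a ∈ A,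
    ‖f x₁ y₁ a - f x₂ y₂ a‖ ≤ L * (‖x₁ - x₂‖ + ‖y₁ - y₂‖)
  snd_lipschitz : ∀ (x₁ x₂ : Euc N) (y₁ y₂ : Euc M), ∀ a ∈ A,
    ‖g x₁ y₁ a - g x₂ y₂ a‖ ≤ L * (‖x₁ - x₂‖ + ‖y₁ - y₂‖)
  fst_bounded : ∀ x y, ∀ a ∈ A, ‖f x y a‖ ≤ Q
  controllable : ∀ K : Set (Euc N × Euc M), IsCompact K → ∃ r > 0, ∀ z ∈ K,
    ball (0 : Euc M) r ⊆ closure (convexHull ℝ ((fun a ↦ g z.1 z.2 a) '' A))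
  cost_continuous : Continuous fun z : Euc N × Euc M × Euc k ↦ ℓ z.1 z.2.1 z.2.2
  cost_coercive : ∀ B : Set (Euc N), IsCompact B → ∀ c : ℝ, ∃ R : ℝ,
    ∀ y : Euc M, R < ‖y‖ → ∀ x ∈ B, ∀ a ∈ A, c < ℓ x y a

/-- Assumption (H5): the initial datum `u₀` is continuous and bounded below by `-Q`. -/
structure IsInitialDatum {N M : ℕ} (u0 : Euc N → Euc M → ℝ) (Q : ℝ) : Prop where
  continuous : Continuous fun z : Euc N × Euc M ↦ u0 z.1 z.2
  neg_le : ∀ x y, -Q ≤ u0 x y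

/-- The vector field of the slow-fast system `(CD_ε)` for the constant control `a`. -/
noncomputable def slowFastField {N M k : ℕ} {A : Set (Euc k)}
    (f : Euc N → Euc M → Euc k → Euc N) (g : Euc N → Euc M → Euc k → Euc M)
    (ε : ℝ) (a : A) (z : Euc N × Euc M) : Euc N × Euc M :=
  (ε • f z.1 z.2 a, g z.1 z.2 a)

section SlowFast

variable {N M k : ℕ} {A : Set (Euc k)} {f : Euc N → Euc M → Euc k → Euc N}
  {g : Euc N → Euc M → Euc k → Euc M} {ℓ : Euc N → Euc M → Euc k → ℝ} {L : NNReal} {Q ε : ℝ}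
  (H : IsControlSystem A f g ℓ L Q)

section Trajectories

variable {α₁ α₂ : ℝ → Euc k} {ξ₁ ξ₂ : ℝ → Euc N} {η₁ η₂ : ℝ → Euc M} {s : ℝ}

lemma comp_concat {W : Type*} (F : Euc N → Euc M → Euc k → W) :
    (fun r ↦ F (concat s ξ₁ ξ₂ r) (concat s η₁ η₂ r) (concat s α₁ α₂ r)) =
      concat s (fun r ↦ F (ξ₁ r) (η₁ r) (α₁ r)) (fun r ↦ F (ξ₂ r) (η₂ r) (α₂ r)) := by
  funext r
  unfold concat
  split_ifs <;> rfl

lemma intervalIntegrable_concat_of_forall {F : Type*} [NormedAddCommGroup F] {F₁ F₂ : ℝ → F}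
    (hs : 0 ≤ s) (h₁ : ∀ t, 0 ≤ t → IntervalIntegrable F₁ volume 0 t)
    (h₂ : ∀ t, 0 ≤ t → IntervalIntegrable F₂ volume 0 t) {t : ℝ} (ht : 0 ≤ t) :
    IntervalIntegrable (concat s F₁ F₂) volume 0 t := by
  rcases le_total t s with hts | hst
  · exact intervalIntegrable_concat_of_le ht hts (h₁ t ht)
  · exact intervalIntegrable_concat hs hst (h₁ s hs) (h₂ _ (sub_nonneg.2 hst))

lemma isTrajectory_concat (hs : 0 ≤ s) (h₁ : IsTrajectory f g ε α₁ ξ₁ η₁)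
    (h₂ : IsTrajectory f g ε α₂ ξ₂ η₂) (hξ : ξ₁ s = ξ₂ 0) (hη : η₁ s = η₂ 0) :
    IsTrajectory f g ε (concat s α₁ α₂) (concat s ξ₁ ξ₂) (concat s η₁ η₂) := by
  obtain ⟨hf₁, hg₁, hξ₁, hη₁⟩ := h₁
  obtain ⟨hf₂, hg₂, hξ₂, hη₂⟩ := h₂
  refine ⟨fun t ht ↦ ?_, fun t ht ↦ ?_, fun t ht ↦ ?_, fun t ht ↦ ?_⟩
  · rw [comp_concat]
    exact intervalIntegrable_concat_of_forall hs hf₁ hf₂ ht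
  · rw [comp_concat]
    exact intervalIntegrable_concat_of_forall hs hg₁ hg₂ ht
  · rw [comp_concat]
    exact concat_eq_add_smul_integral hs hξ hf₁ hf₂ hξ₁ hξ₂ ht
  · rw [comp_concat, ← one_smul ℝ (∫ _ in _.._, _)]
    exact concat_eq_add_smul_integral hs hη hg₁ hg₂ (by simpa using hη₁) (by simpa using hη₂) ht

end Trajectories

include H

lemma lipschitzWith_slowFastField (ε : ℝ) (a : A) :
    LipschitzWith ((‖ε‖₊ + 1) * (2 * L)) (slowFastField f g ε a) := by
  refine LipschitzWith.of_dist_le_mul fun z w ↦ ?_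
  have hsum : ‖z.1 - w.1‖ + ‖z.2 - w.2‖ ≤ 2 * ‖z - w‖ := by
    rw [← Prod.fst_sub, ← Prod.snd_sub]
    linarith [norm_fst_le (z - w), norm_snd_le (z - w)]
  have hf : ‖ε • f z.1 z.2 a - ε • f w.1 w.2 a‖ ≤ ‖ε‖ * (L * (2 * ‖z - w‖)) := by
    rw [← smul_sub, norm_smul]
    gcongr
    exact (H.fst_lipschitz _ _ _ _ a a.2).trans (by gcongr)
  have hg : ‖g z.1 z.2 a - g w.1 w.2 a‖ ≤ L * (2 * ‖z - w‖) :=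
    (H.snd_lipschitz _ _ _ _ a a.2).trans (by gcongr)
  have hL : 0 ≤ L * (2 * ‖z - w‖) := by positivity
  have hεL : 0 ≤ ‖ε‖ * (L * (2 * ‖z - w‖)) := by positivity
  rw [dist_eq_norm, dist_eq_norm, Prod.norm_def]
  push_cast
  refine max_le ?_ ?_
  · simp only [slowFastField, Prod.fst_sub]
    linarith
  · simp only [slowFastField, Prod.snd_sub]
    linarith

lemma continuous_fst_field (a : A) : Continuous fun z : Euc N × Euc M ↦ f z.1 z.2 a := by
  simpa [slowFastField, Function.comp_def] using
    continuous_fst.comp (lipschitzWith_slowFastField H 1 a).continuous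

lemma continuous_snd_field (a : A) : Continuous fun z : Euc N × Euc M ↦ g z.1 z.2 a :=
  continuous_snd.comp (lipschitzWith_slowFastField H 1 a).continuous

lemma continuous_cost_of_mem (a : A) : Continuous fun z : Euc N × Euc M ↦ ℓ z.1 z.2 a :=
  H.cost_continuous.comp (by fun_prop : Continuous fun z : Euc N × Euc M ↦ (z.1, z.2, (a : Euc k)))

lemma IsControlSystem.Q_nonneg : 0 ≤ Q :=
  have ⟨a, ha⟩ := H.nonempty
  (norm_nonneg _).trans (H.fst_bounded 0 0 a ha)

lemma norm_fst_slowFastField_le (ε : ℝ) (a : A) (z : Euc N × Euc M) :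
    ‖ContinuousLinearMap.fst ℝ (Euc N) (Euc M) (slowFastField f g ε a z)‖ ≤ |ε| * Q := by
  simp only [slowFastField, ContinuousLinearMap.coe_fst', norm_smul, Real.norm_eq_abs]
  gcongr
  exact H.fst_bounded _ _ a a.2

lemma continuous_semiflow_slowFastField (a : A) : Continuous fun x : ℝ × (Euc N × Euc M) × ℝ ↦
    semiflow (slowFastField f g x.1 a) x.2.1 x.2.2 := by
  refine continuous_semiflow_of_parametrized (fun ε ↦ lipschitzWith_slowFastField H ε a)
    H.Q_nonneg fun ε δ z ↦ ?_
  rw [dist_eq_norm, Prod.norm_def, Real.dist_eq, mul_comm]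
  refine max_le ?_ ?_
  · simp only [slowFastField, Prod.fst_sub, ← sub_smul, norm_smul, Real.norm_eq_abs]
    gcongr
    exact H.fst_bounded _ _ a a.2
  · simpa [slowFastField] using mul_nonneg (abs_nonneg (ε - δ)) H.Q_nonneg

lemma isTrajectory_semiflow (ε : ℝ) (a : A) (z : Euc N × Euc M) :
    IsTrajectory f g ε (fun _ ↦ a) (fun s ↦ (semiflow (slowFastField f g ε a) z s).1)
      (fun s ↦ (semiflow (slowFastField f g ε a) z s).2) := by
  have hlip := lipschitzWith_slowFastField H ε a
  have hγ := continuous_semiflow hlip z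
  refine ⟨fun t _ ↦ ((continuous_fst_field H a).comp hγ).intervalIntegrable 0 t,
    fun t _ ↦ ((continuous_snd_field H a).comp hγ).intervalIntegrable 0 t, fun t ht ↦ ?_,
    fun t ht ↦ ?_⟩
  · simpa [semiflow_zero hlip, slowFastField] using
      map_semiflow_eq_add_integral hlip (.fst ℝ (Euc N) (Euc M)) z ht
  · simpa [semiflow_zero hlip, slowFastField] using
      map_semiflow_eq_add_integral hlip (.snd ℝ (Euc N) (Euc M)) z ht

lemma exists_abs_cost_le {K : Set (Euc N × Euc M)} (hK : IsCompact K) :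
    ∃ m : ℝ, 0 ≤ m ∧ ∀ z ∈ K, ∀ a ∈ A, |ℓ z.1 z.2 a| ≤ m := by
  have hcont : Continuous fun q : (Euc N × Euc M) × Euc k ↦ |ℓ q.1.1 q.1.2 q.2| :=
    (H.cost_continuous.comp (by fun_prop :
      Continuous fun q : (Euc N × Euc M) × Euc k ↦ (q.1.1, q.1.2, q.2))).abs
  obtain ⟨m, hm⟩ := ((hK.prod H.isCompact).image hcont).bddAbove
  exact ⟨max m 0, le_max_right _ _, fun z hz a ha ↦
    le_max_of_le_left (hm ⟨(z, a), ⟨hz, ha⟩, rfl⟩)⟩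

lemma exists_neg_le_cost {B : Set (Euc N)} (hB : IsCompact B) :
    ∃ m : ℝ, 0 ≤ m ∧ ∀ x ∈ B, ∀ y, ∀ a ∈ A, -m ≤ ℓ x y a := by
  obtain ⟨R, hR⟩ := H.cost_coercive B hB 0
  obtain ⟨m, hm0, hm⟩ := exists_abs_cost_le H (hB.prod (isCompact_closedBall (0 : Euc M) R))
  refine ⟨m, hm0, fun x hx y a ha ↦ ?_⟩
  rcases lt_or_ge R ‖y‖ with hy | hy
  · linarith [hR y hy x hx a ha]
  · exact (abs_le.1 (hm (x, y) ⟨hx, by simpa using hy⟩ a ha)).1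

end SlowFast

/-- The costs of the competitors in the definition of the value function `V^ε(x, y, t)`. -/
def competitorCosts {N M k : ℕ} (A : Set (Euc k))
    (f : Euc N → Euc M → Euc k → Euc N) (g : Euc N → Euc M → Euc k → Euc M)
    (ℓ : Euc N → Euc M → Euc k → ℝ) (u0 : Euc N → Euc M → ℝ)
    (ε : ℝ) (x : Euc N) (y : Euc M) (t : ℝ) : Set ℝ :=
  {v : ℝ | ∃ (α : ℝ → Euc k) (ξ : ℝ → Euc N) (η : ℝ → Euc M),
    IsControl A α ∧ IsTrajectory f g ε α ξ η ∧ ξ 0 = x ∧ η 0 = y ∧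
    IntervalIntegrable (fun s ↦ ℓ (ξ s) (η s) (α s)) volume 0 (t / ε) ∧
    v = ε * (∫ s in 0..(t / ε), ℓ (ξ s) (η s) (α s)) + u0 (ξ (t / ε)) (η (t / ε))}

section Value

variable {N M k : ℕ} {A : Set (Euc k)} {f : Euc N → Euc M → Euc k → Euc N}
  {g : Euc N → Euc M → Euc k → Euc M} {ℓ : Euc N → Euc M → Euc k → ℝ} {L : NNReal} {Q ε m t : ℝ}
  {u0 : Euc N → Euc M → ℝ} (H : IsControlSystem A f g ℓ L Q)
include H

lemma norm_trajectory_fst_sub_le {α : ℝ → Euc k} {ξ : ℝ → Euc N} {η : ℝ → Euc M}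
    (hα : IsControl A α) (hT : IsTrajectory f g ε α ξ η) {s : ℝ} (hs : 0 ≤ s) :
    ‖ξ s - ξ 0‖ ≤ |ε| * Q * s := by
  rw [hT.2.2.1 s hs, add_sub_cancel_left, norm_smul, Real.norm_eq_abs, mul_assoc]
  gcongr
  simpa [abs_of_nonneg hs] using
    intervalIntegral.norm_integral_le_of_norm_le_const (a := 0) (b := s) fun r _ ↦
      H.fst_bounded (ξ r) (η r) (α r) (hα.2 r)

lemma le_of_mem_competitorCosts (C : IsInitialDatum u0 Q) (hε : 0 < ε) (ht : 0 ≤ t) {x : Euc N}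
    {y : Euc M} (hm : ∀ x' ∈ closedBall x (Q * t), ∀ y, ∀ a ∈ A, -m ≤ ℓ x' y a) {v : ℝ}
    (hv : v ∈ competitorCosts A f g ℓ u0 ε x y t) : -Q - m * t ≤ v := by
  obtain ⟨α, ξ, η, hα, hT, h0, -, hint, rfl⟩ := hv
  have hle : ∫ _ in 0..(t / ε), (-m) ≤ ∫ s in 0..(t / ε), ℓ (ξ s) (η s) (α s) := by
    refine intervalIntegral.integral_mono_on (by positivity) intervalIntegrable_const hint
      fun s hs ↦ hm _ ?_ _ _ (hα.2 s)
    rw [mem_closedBall, dist_eq_norm, ← h0]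
    have hsε : ε * s ≤ t := by simpa [mul_comm] using (le_div_iff₀ hε).1 hs.2
    calc ‖ξ s - ξ 0‖ ≤ |ε| * Q * s := norm_trajectory_fst_sub_le H hα hT hs.1
      _ = Q * (ε * s) := by rw [abs_of_pos hε]; ring
      _ ≤ Q * t := mul_le_mul_of_nonneg_left hsε H.Q_nonneg
  rw [intervalIntegral.integral_const, sub_zero, smul_eq_mul] at hle
  have hεle := mul_le_mul_of_nonneg_left hle hε.le
  have : ε * (t / ε * -m) = -(m * t) := by field_simp
  linarith [C.neg_le (ξ (t / ε)) (η (t / ε))]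

lemma bddBelow_competitorCosts (C : IsInitialDatum u0 Q) (hε : 0 < ε) (ht : 0 ≤ t) (x : Euc N)
    (y : Euc M) : BddBelow (competitorCosts A f g ℓ u0 ε x y t) := by
  obtain ⟨m, -, hm⟩ := exists_neg_le_cost H (isCompact_closedBall x (Q * t))
  exact ⟨_, fun _ ↦ le_of_mem_competitorCosts H C hε ht hm⟩

lemma mem_competitorCosts_semiflow (ε : ℝ) (a : A) (z : Euc N × Euc M) (t : ℝ) :
    ε * (∫ s in 0..(t / ε), ℓ (semiflow (slowFastField f g ε a) z s).1
        (semiflow (slowFastField f g ε a) z s).2 a) +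
      u0 (semiflow (slowFastField f g ε a) z (t / ε)).1
        (semiflow (slowFastField f g ε a) z (t / ε)).2 ∈
    competitorCosts A f g ℓ u0 ε z.1 z.2 t := by
  have hlip := lipschitzWith_slowFastField H ε a
  exact ⟨fun _ ↦ a, _, _, ⟨measurable_const, fun _ ↦ a.2⟩, isTrajectory_semiflow H ε a z,
    by rw [semiflow_zero hlip], by rw [semiflow_zero hlip],
    ((continuous_cost_of_mem H a).comp (continuous_semiflow hlip z)).intervalIntegrable _ _, rfl⟩

lemma nonempty_competitorCosts (ε : ℝ) (x : Euc N) (y : Euc M) (t : ℝ) :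
    (competitorCosts A f g ℓ u0 ε x y t).Nonempty :=
  have ⟨a, ha⟩ := H.nonempty
  ⟨_, mem_competitorCosts_semiflow H ε ⟨a, ha⟩ (x, y) t⟩

lemma le_valueFun (C : IsInitialDatum u0 Q) (hε : 0 < ε) (ht : 0 ≤ t) {x : Euc N} (y : Euc M)
    (hm : ∀ x' ∈ closedBall x (Q * t), ∀ y, ∀ a ∈ A, -m ≤ ℓ x' y a) :
    -Q - m * t ≤ valueFun A f g ℓ u0 ε x y t :=
  le_csInf (nonempty_competitorCosts H ε x y t) fun _ ↦ le_of_mem_competitorCosts H C hε ht hm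

lemma valueFun_zero_le (C : IsInitialDatum u0 Q) (hε : 0 < ε) (z : Euc N × Euc M) :
    valueFun A f g ℓ u0 ε z.1 z.2 0 ≤ u0 z.1 z.2 := by
  obtain ⟨a, ha⟩ := H.nonempty
  have hmem := mem_competitorCosts_semiflow (u0 := u0) H ε ⟨a, ha⟩ z 0
  simp only [zero_div, intervalIntegral.integral_same, mul_zero, zero_add,
    semiflow_zero (lipschitzWith_slowFastField H ε ⟨a, ha⟩)] at hmem
  exact csInf_le (bddBelow_competitorCosts H C hε le_rfl z.1 z.2) hmem

lemma valueFun_le_integral_add_valueFun (C : IsInitialDatum u0 Q) (hε : 0 < ε)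
    (z : Euc N × Euc M) (a : A) {s : ℝ} (hs : 0 ≤ s) (hst : ε * s ≤ t) :
    valueFun A f g ℓ u0 ε z.1 z.2 t ≤
      ε * (∫ r in 0..s, ℓ (semiflow (slowFastField f g ε a) z r).1
        (semiflow (slowFastField f g ε a) z r).2 a) +
      valueFun A f g ℓ u0 ε (semiflow (slowFastField f g ε a) z s).1
        (semiflow (slowFastField f g ε a) z s).2 (t - ε * s) := by
  have hlip := lipschitzWith_slowFastField H ε a
  set γ := semiflow (slowFastField f g ε a) z
  have hle : s ≤ t / ε := by rwa [le_div_iff₀ hε, mul_comm]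
  rw [← sub_le_iff_le_add']
  refine le_csInf (nonempty_competitorCosts H _ _ _ _) ?_
  rintro v ⟨α, ξ, η, hα, hT, hξ, hη, hint, rfl⟩
  rw [show (t - ε * s) / ε = t / ε - s by field_simp] at hint ⊢
  have hγ0 : γ 0 = z := semiflow_zero hlip z
  have hcost : IntervalIntegrable (fun r ↦ ℓ (γ r).1 (γ r).2 a) volume 0 s :=
    ((continuous_cost_of_mem H a).comp (continuous_semiflow hlip z)).intervalIntegrable _ _
  rw [sub_le_iff_le_add', ← add_assoc, ← mul_add, ← integral_concat hs hle hcost hint,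
    ← concat_of_ge (γ₁ := fun r ↦ (γ r).1) hξ.symm hle,
    ← concat_of_ge (γ₁ := fun r ↦ (γ r).2) hη.symm hle, ← comp_concat]
  refine csInf_le (bddBelow_competitorCosts H C hε
    ((mul_nonneg hε.le hs).trans hst) z.1 z.2) ⟨_, _, _,
    ⟨measurable_concat measurable_const hα.1, fun r ↦ ?_⟩,
    isTrajectory_concat hs (isTrajectory_semiflow H ε a z) hT hξ.symm hη.symm,
    (concat_of_le hs).trans (congrArg Prod.fst hγ0),
    (concat_of_le hs).trans (congrArg Prod.snd hγ0), ?_, rfl⟩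
  · rcases le_or_gt r s with hr | hr
    · rw [concat_of_le hr]; exact a.2
    · rw [concat_of_lt hr]; exact hα.2 _
  · rw [comp_concat]
    exact intervalIntegrable_concat hs hle hcost hint

lemma valueFun_le_cost_add_valueFun (C : IsInitialDatum u0 Q) (hε : 0 < ε) (w : ControlWord A)
    (z : Euc N × Euc M) (hst : ε * duration w ≤ t) :
    valueFun A f g ℓ u0 ε z.1 z.2 t ≤
      ε * cost (slowFastField f g ε) (fun a z ↦ ℓ z.1 z.2 a) w z +
      valueFun A f g ℓ u0 ε (endpoint (slowFastField f g ε) w z).1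
        (endpoint (slowFastField f g ε) w z).2 (t - ε * duration w) := by
  induction w generalizing z t with
  | nil => simp [cost, endpoint, duration]
  | cons l w ih =>
    simp only [duration, cost, endpoint, mul_add] at hst ⊢
    have hw := mul_nonneg hε.le (duration_nonneg w)
    have hletter := valueFun_le_integral_add_valueFun (t := t) H C hε z l.1 l.2.2
      (by simp only [NNReal.val_eq_coe]; linarith)
    have hword := ih (t := t - ε * l.2) (semiflow (slowFastField f g ε l.1) z l.2) (by linarith)
    rw [sub_sub] at hword
    simp only [NNReal.val_eq_coe] at hletter
    linarith

end Value

section Steering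

section InnerProduct

variable {F : Type*} [NormedAddCommGroup F] [InnerProductSpace ℝ F]

lemma exists_inner_lt_of_ball_subset_closure_convexHull {S : Set F} {r : ℝ} (hr : 0 < r)
    (hS : ball 0 r ⊆ closure (convexHull ℝ S)) {e : F} (he : ‖e‖ = 1) :
    ∃ v ∈ S, ⟪e, v⟫ < -(r / 4) := by
  by_contra! hcon
  have hsub : closure (convexHull ℝ S) ⊆ {v | -(r / 4) ≤ ⟪e, v⟫} :=
    closure_minimal (convexHull_min hcon (convex_halfSpace_ge (innerSL ℝ e).isLinear _))
      (isClosed_le continuous_const (continuous_const.inner continuous_id))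
  have hmem : (-(r / 2)) • e ∈ ball 0 r := by
    rw [mem_ball_zero_iff, norm_smul, he, Real.norm_eq_abs, abs_neg, abs_of_pos (half_pos hr)]
    linarith
  have hge := hsub (hS hmem)
  rw [mem_ofPred_eq, inner_smul_right, real_inner_self_eq_norm_sq, he] at hge
  linarith

lemma norm_add_smul_le_of_inner_le {w v : F} {c s : ℝ} (hc : 0 < c) (hw : w ≠ 0)
    (h : ⟪w, v⟫ ≤ -c * ‖w‖) (hs : 0 ≤ s) (hsv : s * ‖v‖ ^ 2 ≤ c * ‖w‖) :
    ‖w + s • v‖ ≤ ‖w‖ - c / 2 * s := by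
  have hw0 : 0 < ‖w‖ := norm_pos_iff.2 hw
  have hcv : c ≤ ‖v‖ := by
    have := (abs_le.1 (abs_real_inner_le_norm w v)).1
    exact le_of_mul_le_mul_right (by linarith) hw0
  have hcs : c * s ≤ ‖w‖ := by
    refine le_of_mul_le_mul_left ?_ hc
    calc c * (c * s) = s * c ^ 2 := by ring
      _ ≤ s * ‖v‖ ^ 2 := by gcongr
      _ ≤ c * ‖w‖ := hsv
  refine le_of_sq_le_sq ?_ (by linarith)
  have hsq : ‖w + s • v‖ ^ 2 = ‖w‖ ^ 2 + 2 * (s * ⟪w, v⟫) + s * (s * ‖v‖ ^ 2) := by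
    rw [norm_add_sq_real, inner_smul_right, norm_smul, Real.norm_eq_abs, abs_of_nonneg hs]
    ring
  have hinner := mul_le_mul_of_nonneg_left h hs
  have hnorm := mul_le_mul_of_nonneg_left hsv hs
  nlinarith [sq_nonneg (c / 2 * s)]

variable {E : Type*} [NormedAddCommGroup E] [NormedSpace ℝ E] [CompleteSpace E] [CompleteSpace F]

lemma norm_semiflow_snd_sub_le {K : NNReal} {v : E × F → E × F} (hv : LipschitzWith K v)
    {z : E × F} {y : F} {c G ρ s : ℝ} (hc : 0 < c) (hG : ‖v z‖ ≤ G) (hρ : 0 < ρ)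
    (hin : ⟪z.2 - y, (v z).2⟫ ≤ -c * ‖z.2 - y‖) (hs : 0 ≤ s) (hsK : (K + 1) * s ≤ 1)
    (hsG : G ^ 2 * s ≤ c * ρ) (hsρ : 2 * G * s ≤ ρ) (hsc : 2 * K * G * s ≤ c / 4) :
    ‖(semiflow v z s).2 - y‖ ≤ max (2 * ρ) (‖z.2 - y‖ - c / 4 * s) := by
  rcases lt_or_ge ‖z.2 - y‖ ρ with hw | hw
  · refine le_max_of_le_left ?_
    calc ‖(semiflow v z s).2 - y‖
        ≤ ‖(semiflow v z s - z).2‖ + ‖z.2 - y‖ := norm_sub_le_norm_sub_add_norm_sub _ _ _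
      _ ≤ 2 * G * s + ‖z.2 - y‖ := by
        gcongr
        exact (norm_snd_le _).trans ((norm_semiflow_sub_le hv z hs hsK).trans (by gcongr))
      _ ≤ 2 * ρ := by linarith
  · refine le_max_of_le_right ?_
    have hlin : ‖z.2 - y + s • (v z).2‖ ≤ ‖z.2 - y‖ - c / 2 * s := by
      refine norm_add_smul_le_of_inner_le hc (norm_pos_iff.1 (hρ.trans_le hw)) hin hs ?_
      calc s * ‖(v z).2‖ ^ 2 ≤ s * G ^ 2 := by
            gcongr
            exact (norm_snd_le _).trans hG
        _ ≤ c * ρ := by linarith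
        _ ≤ c * ‖z.2 - y‖ := by gcongr
    have herr : ‖(semiflow v z s - z - s • v z).2‖ ≤ c / 4 * s := by
      refine (norm_snd_le _).trans ((norm_semiflow_sub_sub_smul_le hv z hs hsK).trans ?_)
      calc 2 * K * ‖v z‖ * s ^ 2 ≤ 2 * K * G * s ^ 2 := by gcongr
        _ = (2 * K * G * s) * s := by ring
        _ ≤ c / 4 * s := by gcongr
    calc ‖(semiflow v z s).2 - y‖
        = ‖(semiflow v z s - z - s • v z).2 + (z.2 - y + s • (v z).2)‖ := by
          simp only [Prod.snd_sub, Prod.smul_snd]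
          congr 1
          abel
      _ ≤ c / 4 * s + (‖z.2 - y‖ - c / 2 * s) := norm_add_le_of_le herr hlin
      _ = ‖z.2 - y‖ - c / 4 * s := by ring

end InnerProduct

lemma eventually_const_mul_le (c : ℝ) {b : ℝ} (hb : 0 < b) : ∀ᶠ s in 𝓝[>] 0, c * s ≤ b := by
  have : Tendsto (fun s ↦ c * s) (𝓝 0) (𝓝 0) := by
    simpa using (continuous_const_mul c).tendsto 0
  exact (this.eventually (eventually_le_nhds hb)).filter_mono nhdsWithin_le_nhds

variable {N M k : ℕ} {A : Set (Euc k)} {f : Euc N → Euc M → Euc k → Euc N}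
  {g : Euc N → Euc M → Euc k → Euc M} {ℓ : Euc N → Euc M → Euc k → ℝ} {L : NNReal} {Q : ℝ}
  (H : IsControlSystem A f g ℓ L Q)
include H

-- `g` need not be bounded on `K × A`; the bound on the steering controls comes from compactness.
lemma exists_inner_le_and_norm_le {K : Set (Euc N × Euc M)} (hK : IsCompact K) :
    ∃ c > 0, ∃ G, ∀ z ∈ K, ∀ w : Euc M, ∃ a : A,
      ⟪w, g z.1 z.2 a⟫ ≤ -c * ‖w‖ ∧ ‖g z.1 z.2 a‖ ≤ G := by
  obtain ⟨r, hr, hball⟩ := H.controllable K hK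
  have hsphere : ∃ G, ∀ p ∈ K ×ˢ sphere (0 : Euc M) 1, ∃ a : A,
      ⟪p.2, g p.1.1 p.1.2 a⟫ ≤ -(r / 4) ∧ ‖g p.1.1 p.1.2 a‖ ≤ G := by
    refine (hK.prod (isCompact_sphere (0 : Euc M) 1)).induction_on (p := fun S ↦ ∃ G, ∀ p ∈ S,
      ∃ a : A, ⟪p.2, g p.1.1 p.1.2 a⟫ ≤ -(r / 4) ∧ ‖g p.1.1 p.1.2 a‖ ≤ G) ⟨0, by simp⟩
      (fun S T hST ⟨G, hG⟩ ↦ ⟨G, fun p hp ↦ hG p (hST hp)⟩) ?_ ?_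
    · rintro S T ⟨G, hG⟩ ⟨G', hG'⟩
      refine ⟨max G G', fun p hp ↦ hp.elim (fun hp ↦ ?_) fun hp ↦ ?_⟩
      · exact (hG p hp).imp fun a ha ↦ ⟨ha.1, ha.2.trans (le_max_left _ _)⟩
      · exact (hG' p hp).imp fun a ha ↦ ⟨ha.1, ha.2.trans (le_max_right _ _)⟩
    · rintro ⟨z, e⟩ ⟨hz, he⟩
      obtain ⟨_, ⟨a, ha, rfl⟩, hea⟩ := exists_inner_lt_of_ball_subset_closure_convexHull hr
        (hball z hz) (mem_sphere_zero_iff_norm.1 he)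
      have hg : Continuous fun p : (Euc N × Euc M) × Euc M ↦ g p.1.1 p.1.2 a :=
        (continuous_snd_field H ⟨a, ha⟩).comp continuous_fst
      have hnhds := ((continuous_snd.inner hg).tendsto (z, e)).eventually_lt_const hea |>.and
        ((hg.norm.tendsto (z, e)).eventually_lt_const (lt_add_one _))
      exact ⟨_, mem_nhdsWithin_of_mem_nhds hnhds, _, fun p hp ↦ ⟨⟨a, ha⟩, hp.1.le, hp.2.le⟩⟩
  obtain ⟨G, hG⟩ := hsphere
  obtain ⟨a₀, ha₀⟩ := H.nonempty
  obtain ⟨G₀, hG₀⟩ :=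
    hK.exists_bound_of_continuousOn (continuous_snd_field H ⟨a₀, ha₀⟩).continuousOn
  refine ⟨r / 4, by positivity, max G G₀, fun z hz w ↦ ?_⟩
  rcases eq_or_ne w 0 with rfl | hw
  · exact ⟨⟨a₀, ha₀⟩, by simp, (hG₀ z hz).trans (le_max_right _ _)⟩
  · obtain ⟨a, ha, haG⟩ := hG (z, ‖w‖⁻¹ • w) ⟨hz, by simp [norm_smul, hw]⟩
    refine ⟨a, ?_, haG.trans (le_max_left _ _)⟩
    rwa [real_inner_smul_left, inv_mul_le_iff₀ (norm_pos_iff.2 hw), mul_comm] at ha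

lemma exists_steering_control {K : Set (Euc N × Euc M)} (hK : IsCompact K) (y : Euc M) :
    ∃ c > 0, ∀ ρ > 0, ∀ ε, ∃ σ > 0, ∀ z ∈ K, ∃ a : A, ∀ s ∈ Icc (0 : ℝ) σ,
      ‖(semiflow (slowFastField f g ε a) z s).2 - y‖ ≤ max ρ (‖z.2 - y‖ - c * s) := by
  obtain ⟨c, hc, G, hG⟩ := exists_inner_le_and_norm_le H hK
  refine ⟨c / 4, by positivity, fun ρ hρ ε ↦ ?_⟩
  set Kε : NNReal := (‖ε‖₊ + 1) * (2 * L)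
  set G' := max (|ε| * Q) G
  have hsmall : ∀ᶠ s : ℝ in 𝓝[>] 0, ((Kε : ℝ) + 1) * s ≤ 1 ∧ G' ^ 2 * s ≤ c * (ρ / 2) ∧
      2 * G' * s ≤ ρ / 2 ∧ 2 * (Kε : ℝ) * G' * s ≤ c / 4 :=
    (eventually_const_mul_le _ one_pos).and <| (eventually_const_mul_le _ (by positivity)).and <|
      (eventually_const_mul_le _ (half_pos hρ)).and (eventually_const_mul_le _ (by positivity))
  obtain ⟨σ, ⟨hσ₁, hσ₂, hσ₃, hσ₄⟩, hσ⟩ := (hsmall.and self_mem_nhdsWithin).exists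
  refine ⟨σ, hσ, fun z hz ↦ ?_⟩
  obtain ⟨a, hin, hag⟩ := hG z hz (z.2 - y)
  have hv : ‖slowFastField f g ε a z‖ ≤ G' :=
    max_le_max (norm_fst_slowFastField_le H ε a z) hag
  have hG'0 : 0 ≤ G' := (norm_nonneg _).trans hv
  have hmono {b r s : ℝ} (hb : 0 ≤ b) (hr : b * σ ≤ r) (hs : s ≤ σ) : b * s ≤ r :=
    (mul_le_mul_of_nonneg_left hs hb).trans hr
  refine ⟨a, fun s hs ↦ ?_⟩
  simpa only [mul_div_cancel₀ ρ (two_ne_zero' ℝ)] using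
    norm_semiflow_snd_sub_le (lipschitzWith_slowFastField H ε a) hc hv (half_pos hρ) hin hs.1
      (hmono (by positivity) hσ₁ hs.2) (hmono (by positivity) hσ₂ hs.2)
      (hmono (by positivity) hσ₃ hs.2) (hmono (by positivity) hσ₄ hs.2)

lemma norm_semiflow_slowFastField_fst_sub_le (ε : ℝ) (a : A) (z : Euc N × Euc M) {s : ℝ}
    (hs : 0 ≤ s) : ‖(semiflow (slowFastField f g ε a) z s).1 - z.1‖ ≤ |ε| * Q * s :=
  norm_map_semiflow_sub_le (lipschitzWith_slowFastField H ε a)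
    (norm_fst_slowFastField_le H ε a) z hs

lemma norm_endpoint_slowFastField_fst_sub_le (ε : ℝ) (w : ControlWord A) (z : Euc N × Euc M) :
    ‖(endpoint (slowFastField f g ε) w z).1 - z.1‖ ≤ |ε| * Q * duration w :=
  norm_map_endpoint_sub_le (lipschitzWith_slowFastField H ε) (norm_fst_slowFastField_le H ε) w z

variable {x : Euc N} {y : Euc M} {R R₁ c ρ ε σ : ℝ}

lemma exists_word_of_steering_control (hc : 0 ≤ c) (hρ : ρ ≤ R₁)
    (hctrl : ∀ z ∈ closedBall x R ×ˢ closedBall y R₁, ∃ a : A, ∀ s ∈ Icc (0 : ℝ) σ,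
      ‖(semiflow (slowFastField f g ε a) z s).2 - y‖ ≤ max ρ (‖z.2 - y‖ - c * s))
    (n : ℕ) {τ : NNReal} (hτ : τ ≤ σ) {z : Euc N × Euc M}
    (hx : ‖z.1 - x‖ + |ε| * Q * (n * τ) ≤ R) (hy : ‖z.2 - y‖ ≤ R₁) :
    ∃ w : ControlWord A, duration w = n * τ ∧
      StaysIn (slowFastField f g ε) (closedBall x R ×ˢ closedBall y R₁) w z ∧
      ‖(endpoint (slowFastField f g ε) w z).2 - y‖ ≤ max ρ (‖z.2 - y‖ - c * (n * τ)) := by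
  have hεQ : 0 ≤ |ε| * Q := mul_nonneg (abs_nonneg ε) H.Q_nonneg
  induction n generalizing z with
  | zero =>
    simp only [Nat.cast_zero, zero_mul, mul_zero, add_zero, sub_zero] at hx ⊢
    exact ⟨[], rfl, by simpa [StaysIn, dist_eq_norm] using ⟨hx, hy⟩, le_max_right _ _⟩
  | succ n ih =>
    push_cast at hx ⊢
    have hn := mul_nonneg hεQ (by positivity : 0 ≤ (n : ℝ) * τ)
    have hslow {s : ℝ} (hs : 0 ≤ s) (a : A) :
        ‖(semiflow (slowFastField f g ε a) z s).1 - x‖ ≤ |ε| * Q * s + ‖z.1 - x‖ :=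
      (norm_sub_le_norm_sub_add_norm_sub _ z.1 _).trans <|
        add_le_add_left (norm_semiflow_slowFastField_fst_sub_le H ε a z hs) _
    have hτ0 := mul_nonneg hεQ τ.coe_nonneg
    obtain ⟨a, ha⟩ := hctrl z (by
      simp only [mem_prod, mem_closedBall, dist_eq_norm]
      exact ⟨by linarith, hy⟩)
    have hstay : ∀ s ∈ Icc (0 : ℝ) τ,
        semiflow (slowFastField f g ε a) z s ∈ closedBall x R ×ˢ closedBall y R₁ := fun s hs ↦ by
      simp only [mem_prod, mem_closedBall, dist_eq_norm]
      refine ⟨(hslow hs.1 a).trans ?_, (ha s ⟨hs.1, hs.2.trans hτ⟩).trans (max_le hρ ?_)⟩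
      · linarith [mul_le_mul_of_nonneg_left hs.2 hεQ]
      · linarith [mul_nonneg hc hs.1]
    have hτend := ha τ ⟨τ.coe_nonneg, hτ⟩
    obtain ⟨w, hw, hwK, hend⟩ := ih (z := semiflow (slowFastField f g ε a) z τ)
      (by linarith [hslow τ.coe_nonneg a])
      (by simpa [dist_eq_norm] using (hstay τ ⟨τ.coe_nonneg, le_rfl⟩).2)
    refine ⟨(a, τ) :: w, by simp only [duration, hw]; ring, ⟨hstay, hwK⟩,
      hend.trans (max_le (le_max_left _ _) ?_)⟩
    have hcn := mul_nonneg hc (by positivity : 0 ≤ (n : ℝ) * τ)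
    rcases le_max_iff.1 hτend with h | h
    · exact le_max_of_le_left (by linarith)
    · exact le_max_of_le_right (by linarith)

variable (x y R R₁) in
lemma exists_steering_word :
    ∃ c > 0, ∀ ρ > 0, ρ ≤ R₁ → ∀ ε, ∀ D ≥ 0, ∀ z : Euc N × Euc M,
      ‖z.1 - x‖ + |ε| * Q * D ≤ R → ‖z.2 - y‖ ≤ R₁ →
      ∃ w : ControlWord A, duration w = D ∧
        StaysIn (slowFastField f g ε) (closedBall x R ×ˢ closedBall y R₁) w z ∧
        ‖(endpoint (slowFastField f g ε) w z).2 - y‖ ≤ max ρ (‖z.2 - y‖ - c * D) := by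
  obtain ⟨c, hc, hsteer⟩ := exists_steering_control H
    ((isCompact_closedBall x R).prod (isCompact_closedBall y R₁)) y
  refine ⟨c, hc, fun ρ hρ hρR ε D hD z hx hy ↦ ?_⟩
  obtain ⟨σ, hσ, hctrl⟩ := hsteer ρ hρ ε
  obtain ⟨n, hn⟩ := exists_nat_gt (D / σ)
  have hn0 : (0 : ℝ) < n := (div_nonneg hD hσ.le).trans_lt hn
  obtain ⟨τ, hτ⟩ : ∃ τ : NNReal, (τ : ℝ) = D / n := ⟨⟨D / n, by positivity⟩, rfl⟩
  have hτσ : (τ : ℝ) ≤ σ := by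
    rw [hτ, div_le_iff₀ hn0]
    rw [div_lt_iff₀ hσ] at hn
    linarith
  have hD : (n : ℝ) * τ = D := by rw [hτ]; field_simp
  simpa only [hD] using
    exists_word_of_steering_control H hc.le hρR hctrl n hτσ (by rwa [hD]) hy

end Steering

section Equibounded

variable {N M k : ℕ} {A : Set (Euc k)} {f : Euc N → Euc M → Euc k → Euc N}
  {g : Euc N → Euc M → Euc k → Euc M} {ℓ : Euc N → Euc M → Euc k → ℝ} {L : NNReal} {Q : ℝ}
  {u0 : Euc N → Euc M → ℝ} (H : IsControlSystem A f g ℓ L Q) (C : IsInitialDatum u0 Q)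
include H C

lemma exists_valueFun_le_add_valueFun (x : Euc N) (y : Euc M) (R R₁ : ℝ) :
    ∃ c > 0, ∃ m ≥ 0, ∀ ρ > 0, ρ ≤ R₁ → ∀ ε > 0, ∀ s ≥ 0, ∀ t ≥ s, ∀ z : Euc N × Euc M,
      ‖z.1 - x‖ + Q * s ≤ R → ‖z.2 - y‖ ≤ R₁ → ∃ z' : Euc N × Euc M,
        ‖z'.1 - z.1‖ ≤ Q * s ∧ ‖z'.2 - y‖ ≤ max ρ (‖z.2 - y‖ - c * (s / ε)) ∧
        valueFun A f g ℓ u0 ε z.1 z.2 t ≤ m * s + valueFun A f g ℓ u0 ε z'.1 z'.2 (t - s) := by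
  obtain ⟨c, hc, hsteer⟩ := exists_steering_word H x y R R₁
  obtain ⟨m, hm0, hm⟩ := exists_abs_cost_le H
    ((isCompact_closedBall x R).prod (isCompact_closedBall y R₁))
  refine ⟨c, hc, m, hm0, fun ρ hρ hρR ε hε s hs t hst z hx hy ↦ ?_⟩
  have hdrift : |ε| * Q * (s / ε) = Q * s := by
    rw [abs_of_pos hε]
    field_simp
  obtain ⟨w, hw, hwK, hend⟩ :=
    hsteer ρ hρ hρR ε (s / ε) (by positivity) z (by rwa [hdrift]) hy
  have hεw : ε * duration w = s := by rw [hw, mul_div_cancel₀ s hε.ne']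
  refine ⟨endpoint (slowFastField f g ε) w z, ?_, hend, ?_⟩
  · rw [← hdrift, ← hw]
    exact norm_endpoint_slowFastField_fst_sub_le H ε w z
  · have hval := valueFun_le_cost_add_valueFun (t := t) H C hε w z (hεw.trans_le hst)
    have hcost := cost_le_of_staysIn (lipschitzWith_slowFastField H ε) (continuous_cost_of_mem H)
      (fun a z hz ↦ (abs_le.1 (hm z hz a a.2)).2) hwK
    rw [hεw] at hval
    refine hval.trans (add_le_add_left ?_ _)
    calc ε * cost (slowFastField f g ε) (fun a z ↦ ℓ z.1 z.2 a) w z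
        ≤ ε * (m * duration w) := by gcongr
      _ = m * s := by rw [← hεw]; ring

lemma exists_neg_le_valueFun (r : ℝ) :
    ∃ B, ∀ ε > 0, ∀ x y t, ‖x‖ ≤ r → 0 ≤ t → t ≤ r → -B ≤ valueFun A f g ℓ u0 ε x y t := by
  obtain ⟨m, hm0, hm⟩ := exists_neg_le_cost H (isCompact_closedBall (0 : Euc N) (r + Q * r))
  refine ⟨Q + m * r, fun ε hε x y t hx ht htr ↦ ?_⟩
  have hQt := mul_le_mul_of_nonneg_left htr H.Q_nonneg
  have hmt := mul_le_mul_of_nonneg_left htr hm0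
  refine le_trans (by linarith) (le_valueFun (t := t) H C hε ht y fun x' hx' ↦ hm x' ?_)
  refine closedBall_subset_closedBall' ?_ hx'
  rw [dist_zero_right]
  linarith

lemma exists_valueFun_le {r : ℝ} (hr : 0 < r) :
    ∃ B, ∀ ε > 0, ∀ z : Euc N × Euc M, ∀ t, ‖z‖ ≤ r → 0 ≤ t → t ≤ r →
      valueFun A f g ℓ u0 ε z.1 z.2 t ≤ B := by
  obtain ⟨c, hc, m, hm0, hsteer⟩ :=
    exists_valueFun_le_add_valueFun H C (0 : Euc N) (0 : Euc M) (r + Q * r) r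
  obtain ⟨U, hU⟩ := (((isCompact_closedBall (0 : Euc N) (r + Q * r)).prod
    (isCompact_closedBall (0 : Euc M) r)).image C.continuous).bddAbove
  refine ⟨m * r + U, fun ε hε z t hz ht htr ↦ ?_⟩
  have hx := (norm_fst_le z).trans hz
  have hy := (norm_snd_le z).trans hz
  have hQt := mul_le_mul_of_nonneg_left htr H.Q_nonneg
  obtain ⟨z', hx', hy', hval⟩ := hsteer r hr le_rfl ε hε t ht t le_rfl z
    (by rw [sub_zero]; linarith) (by rwa [sub_zero])
  have hz' : z' ∈ closedBall (0 : Euc N) (r + Q * r) ×ˢ closedBall (0 : Euc M) r := by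
    simp only [mem_prod, mem_closedBall, dist_eq_norm]
    refine ⟨?_, hy'.trans (max_le le_rfl ?_)⟩
    · rw [sub_zero]
      linarith [norm_sub_norm_le z'.1 z.1]
    · rw [sub_zero]
      linarith [show 0 ≤ c * (t / ε) by positivity]
  rw [sub_self] at hval
  have hmt := mul_le_mul_of_nonneg_left htr hm0
  linarith [valueFun_zero_le H C hε z', hU ⟨z', hz', rfl⟩]

lemma locEquibounded_valueFun : LocEquibounded (valueFun A f g ℓ u0) := by
  intro S hS
  obtain ⟨r, hr, hSr⟩ := hS.exists_pos_norm_le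
  obtain ⟨B, hB⟩ := exists_neg_le_valueFun H C r
  obtain ⟨B', hB'⟩ := exists_valueFun_le H C hr
  refine ⟨max B B', fun ε hε z hz ht ↦ abs_le.2 ⟨?_, ?_⟩⟩
  all_goals
    have hx : ‖z.1‖ ≤ r := (norm_fst_le z).trans (hSr z hz)
    have hy : ‖z.2.1‖ ≤ r := ((norm_fst_le z.2).trans (norm_snd_le z)).trans (hSr z hz)
    have htr : z.2.2 ≤ r := (le_abs_self _).trans
      (((norm_snd_le z.2).trans (norm_snd_le z)).trans (hSr z hz))
  · linarith [hB ε hε z.1 z.2.1 z.2.2 hx ht htr, le_max_left B B']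
  · exact (hB' ε hε (z.1, z.2.1) z.2.2 (max_le hx hy) ht htr).trans (le_max_right _ _)

end Equibounded

section UpperLim

variable {Z : Type*} [TopologicalSpace Z] {V : ℝ → Z → ℝ} {z : Z}

lemma upperLim_eq_limsup [FirstCountableTopology Z]
    (hV : (𝓝[>] (0 : ℝ) ×ˢ 𝓝 z).IsBoundedUnder (· ≤ ·) fun p ↦ |V p.1 p.2|) :
    upperLim V z = limsup (fun p ↦ V p.1 p.2) (𝓝[>] (0 : ℝ) ×ˢ 𝓝 z) := by
  obtain ⟨hle, hge⟩ := isBoundedUnder_le_abs.1 hV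
  have hlimsup_le {p : ℕ → ℝ × Z} (hp : Tendsto p atTop (𝓝[>] (0 : ℝ) ×ˢ 𝓝 z)) :
      limsup (fun n ↦ V (p n).1 (p n).2) atTop ≤
        limsup (fun p ↦ V p.1 p.2) (𝓝[>] (0 : ℝ) ×ˢ 𝓝 z) :=
    limsup_le_limsup_of_le (f := map p atTop) hp (hge.mono hp).isCoboundedUnder_le hle
  have htendsto {e : ℕ → ℝ} {w : ℕ → Z} (he : ∀ n, 0 < e n) (he0 : Tendsto e atTop (𝓝 0))
      (hw : Tendsto w atTop (𝓝 z)) :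
      Tendsto (fun n ↦ (e n, w n)) atTop (𝓝[>] (0 : ℝ) ×ˢ 𝓝 z) :=
    (tendsto_nhdsWithin_iff.2 ⟨he0, .of_forall he⟩).prodMk hw
  refine csSup_eq_of_forall_le_of_forall_lt_exists_gt ?_ ?_ fun c hc ↦ ?_
  · exact ⟨limsup (fun n : ℕ ↦ V (1 / ((n : ℝ) + 1)) z) atTop, fun n ↦ 1 / ((n : ℝ) + 1),
      fun _ ↦ z, fun n ↦ by positivity, tendsto_one_div_add_atTop_nhds_zero_nat,
      tendsto_const_nhds, rfl⟩
  · rintro _ ⟨e, w, he, he0, hw, rfl⟩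
    exact hlimsup_le (p := fun n ↦ (e n, w n)) (htendsto he he0 hw)
  · obtain ⟨c', hcc', hc'⟩ := exists_between hc
    have hpos : ∀ᶠ p in 𝓝[>] (0 : ℝ) ×ˢ 𝓝 z, 0 < p.1 :=
      tendsto_fst.eventually eventually_mem_nhdsWithin
    obtain ⟨p, hp, hpc⟩ := exists_seq_forall_of_frequently
      ((frequently_lt_of_lt_limsup hge.isCoboundedUnder_le hc').and_eventually hpos)
    obtain ⟨hp₁, hp₂⟩ := tendsto_prod_iff'.1 hp
    have hlimsup : c' ≤ limsup (fun n ↦ V (p n).1 (p n).2) atTop :=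
      le_limsup_of_frequently_le (.of_forall fun n ↦ (hpc n).1.le) (hle.mono (f := map p atTop) hp)
    exact ⟨_, ⟨fun n ↦ (p n).1, fun n ↦ (p n).2, fun n ↦ (hpc n).2,
      hp₁.mono_right nhdsWithin_le_nhds, hp₂, rfl⟩, hcc'.trans_le hlimsup⟩

lemma eventually_lt_of_upperLim_lt [FirstCountableTopology Z]
    (hV : (𝓝[>] (0 : ℝ) ×ˢ 𝓝 z).IsBoundedUnder (· ≤ ·) fun p ↦ |V p.1 p.2|) {c : ℝ}
    (hc : upperLim V z < c) : ∀ᶠ p in 𝓝[>] (0 : ℝ) ×ˢ 𝓝 z, V p.1 p.2 < c :=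
  eventually_lt_of_limsup_lt (upperLim_eq_limsup hV ▸ hc) (isBoundedUnder_le_abs.1 hV).1

lemma upperLim_le_of_eventually_le [FirstCountableTopology Z]
    (hV : (𝓝[>] (0 : ℝ) ×ˢ 𝓝 z).IsBoundedUnder (· ≤ ·) fun p ↦ |V p.1 p.2|) {c : ℝ}
    (hc : ∀ᶠ p in 𝓝[>] (0 : ℝ) ×ˢ 𝓝 z, V p.1 p.2 ≤ c) : upperLim V z ≤ c :=
  upperLim_eq_limsup hV ▸ limsup_le_of_le (isBoundedUnder_le_abs.1 hV).2.isCoboundedUnder_le hc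

lemma eventually_eventually_prod_nhds {α : Type*} {l : Filter α} {P : α × Z → Prop}
    (h : ∀ᶠ p in l ×ˢ 𝓝 z, P p) : ∀ᶠ z' in 𝓝 z, ∀ᶠ p in l ×ˢ 𝓝 z', P p := by
  obtain ⟨pa, hpa, pb, hpb, hP⟩ := eventually_prod_iff.1 h
  filter_upwards [eventually_eventually_nhds.2 hpb] with z' hz'
  exact eventually_prod_iff.2 ⟨pa, hpa, pb, hz', hP⟩

lemma upperSemicontinuousAt_upperLim [FirstCountableTopology Z]
    (hV : (𝓝[>] (0 : ℝ) ×ˢ 𝓝 z).IsBoundedUnder (· ≤ ·) fun p ↦ |V p.1 p.2|) :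
    UpperSemicontinuousAt (upperLim V) z := by
  intro c hc
  obtain ⟨c', hc', hc'c⟩ := exists_between hc
  obtain ⟨B, hB⟩ := hV
  filter_upwards [eventually_eventually_prod_nhds (eventually_map.1 hB),
    eventually_eventually_prod_nhds (eventually_lt_of_upperLim_lt ⟨B, hB⟩ hc')] with z' hz' hlt
  exact (upperLim_le_of_eventually_le ⟨B, hz'⟩ (hlt.mono fun _ h ↦ h.le)).trans_lt hc'c

end UpperLim

section WeakSemilimit

/-- The family of value functions `V^ε` on the space of all `(x, y, t)`. -/
noncomputable abbrev valueFamily {N M k : ℕ} (A : Set (Euc k))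
    (f : Euc N → Euc M → Euc k → Euc N) (g : Euc N → Euc M → Euc k → Euc M)
    (ℓ : Euc N → Euc M → Euc k → ℝ) (u0 : Euc N → Euc M → ℝ) (ε : ℝ)
    (z : Euc N × Euc M × ℝ) : ℝ :=
  valueFun A f g ℓ u0 ε z.1 z.2.1 z.2.2

lemma dist_mk_mk_lt_iff {N M : ℕ} {x x' : Euc N} {y y' : Euc M} {t t' r : ℝ} :
    dist (x, y, t) (x', y', t') < r ↔ ‖x - x'‖ < r ∧ ‖y - y'‖ < r ∧ |t - t'| < r := by
  rw [Prod.dist_eq, Prod.dist_eq, max_lt_iff, max_lt_iff, dist_eq_norm, dist_eq_norm, Real.dist_eq]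

variable {N M k : ℕ} {A : Set (Euc k)} {f : Euc N → Euc M → Euc k → Euc N}
  {g : Euc N → Euc M → Euc k → Euc M} {ℓ : Euc N → Euc M → Euc k → ℝ} {L : NNReal} {Q : ℝ}
  {u0 : Euc N → Euc M → ℝ} (H : IsControlSystem A f g ℓ L Q) (C : IsInitialDatum u0 Q)
include H C

lemma isBoundedUnder_abs_valueFamily (x : Euc N) (y : Euc M) {t : ℝ} (ht : 0 < t) :
    (𝓝[>] (0 : ℝ) ×ˢ 𝓝 (x, y, t)).IsBoundedUnder (· ≤ ·)
      fun p ↦ |valueFamily A f g ℓ u0 p.1 p.2| := by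
  obtain ⟨B, hB⟩ := locEquibounded_valueFun H C (ball (x, y, t) 1) isBounded_ball
  have hpos : ∀ᶠ z : Euc N × Euc M × ℝ in 𝓝 (x, y, t), 0 < z.2.2 :=
    (by fun_prop : Continuous fun z : Euc N × Euc M × ℝ ↦ z.2.2).tendsto _ |>.eventually_const_lt ht
  refine ⟨B, eventually_map.2 ?_⟩
  filter_upwards [prod_mem_prod self_mem_nhdsWithin
    (inter_mem (ball_mem_nhds (x, y, t) one_pos) hpos)] with p hp
  exact hB _ hp.1 _ hp.2.1 (le_of_lt hp.2.2)

lemma exists_valueFun_le_add_near (x : Euc N) (y y' : Euc M) {δ : ℝ} (hδ : 0 < δ) :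
    ∃ s₀ > 0, ∀ s₁ > 0, ∀ᶠ ε in 𝓝[>] (0 : ℝ), ∀ s ∈ Icc s₁ s₀, ∀ t ≥ s, ∀ z : Euc N × Euc M,
      ‖z.1 - x‖ ≤ δ / 2 → ‖z.2 - y‖ ≤ δ → ∃ z' : Euc N × Euc M,
        ‖z'.1 - x‖ ≤ δ ∧ ‖z'.2 - y'‖ ≤ δ ∧
        valueFun A f g ℓ u0 ε z.1 z.2 t ≤ valueFun A f g ℓ u0 ε z'.1 z'.2 (t - s) + δ := by
  set R := δ + ‖y - y'‖
  obtain ⟨c, hc, m, hm0, hsteer⟩ := exists_valueFun_le_add_valueFun H C x y' δ R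
  obtain ⟨s₀, ⟨hQs, hms⟩, hs₀⟩ := ((eventually_const_mul_le Q (half_pos hδ)).and
    (eventually_const_mul_le m hδ) |>.and self_mem_nhdsWithin).exists
  refine ⟨s₀, hs₀, fun s₁ hs₁ ↦ ?_⟩
  filter_upwards [eventually_const_mul_le R (mul_pos hc hs₁), self_mem_nhdsWithin]
    with ε hε (hε0 : 0 < ε) s hs t hst z hx hy
  have hQ : Q * s ≤ δ / 2 := (mul_le_mul_of_nonneg_left hs.2 H.Q_nonneg).trans hQs
  have hm : m * s ≤ δ := (mul_le_mul_of_nonneg_left hs.2 hm0).trans hms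
  have hyR : ‖z.2 - y'‖ ≤ R :=
    (norm_sub_le_norm_sub_add_norm_sub _ y _).trans (add_le_add hy le_rfl)
  obtain ⟨z', hx', hy', hval⟩ := hsteer δ hδ (le_add_of_nonneg_right (norm_nonneg _)) ε hε0 s
    (hs₁.le.trans hs.1) t hst z (by linarith) hyR
  refine ⟨z', ?_, hy'.trans (max_le le_rfl ?_), by linarith⟩
  · linarith [norm_sub_le_norm_sub_add_norm_sub z'.1 z.1 x]
  · have hRs : R ≤ c * (s / ε) := by
      rw [← mul_div_assoc, le_div_iff₀ hε0]
      exact hε.trans (mul_le_mul_of_nonneg_left hs.1 hc.le)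
    linarith

lemma upperLim_valueFamily_le (x : Euc N) (y y' : Euc M) {t : ℝ} (ht : 0 < t) :
    upperLim (valueFamily A f g ℓ u0) (x, y, t) ≤
      upperLim (valueFamily A f g ℓ u0) (x, y', t) := by
  refine le_of_forall_pos_le_add fun η hη ↦ ?_
  have hlt := eventually_lt_of_upperLim_lt (isBoundedUnder_abs_valueFamily H C x y' ht)
    (lt_add_of_pos_right _ (half_pos hη))
  obtain ⟨P, hP, r, hr, hPr⟩ := Metric.eventually_prod_nhds_iff.1 hlt
  obtain ⟨δ, hδ, hδη, hδr⟩ : ∃ δ > 0, δ ≤ η / 2 ∧ δ < r :=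
    ⟨min (η / 2) (r / 2), by positivity, min_le_left _ _, (min_le_right _ _).trans_lt (by linarith)⟩
  obtain ⟨s₀, hs₀, hsteer⟩ := exists_valueFun_le_add_near H C x y y' hδ
  set s := min s₀ (min (t / 2) (δ / 2))
  have hs : 0 < s := by positivity
  have hst : s ≤ t / 2 := (min_le_right _ _).trans (min_le_left _ _)
  have hsδ : s ≤ δ / 2 := (min_le_right _ _).trans (min_le_right _ _)
  refine upperLim_le_of_eventually_le (isBoundedUnder_abs_valueFamily H C x y ht) ?_
  refine Metric.eventually_prod_nhds_iff.2 ⟨_, (hsteer s hs).and hP, min (t / 2) (δ / 2),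
    by positivity, ?_⟩
  rintro ε ⟨hε, hPε⟩ ⟨x₁, y₁, t₁⟩ hdist
  simp only [dist_mk_mk_lt_iff, lt_min_iff] at hdist
  obtain ⟨⟨-, -, htt⟩, hx₁, hy₁, ht₁⟩ := hdist
  rw [abs_lt] at htt ht₁
  obtain ⟨z', hx', hy', hval⟩ := hε s ⟨le_rfl, min_le_left _ _⟩ t₁ (by linarith) (x₁, y₁)
    hx₁.le (by simp only; linarith)
  have hnear := hPr hPε (x := (z'.1, z'.2, t₁ - s)) (
    dist_mk_mk_lt_iff.2 ⟨by linarith, by linarith, abs_lt.2 ⟨by linarith, by linarith⟩⟩)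
  simp only [valueFamily] at hnear ⊢
  linarith

lemma upperLim_valueFamily_eq (x : Euc N) (y y' : Euc M) {t : ℝ} (ht : 0 < t) :
    upperLim (valueFamily A f g ℓ u0) (x, y, t) =
      upperLim (valueFamily A f g ℓ u0) (x, y', t) :=
  le_antisymm (upperLim_valueFamily_le H C x y y' ht) (upperLim_valueFamily_le H C x y' y ht)

lemma upperSemicontinuousOn_upperLim_valueFamily (y : Euc M) :
    UpperSemicontinuousOn
      (fun w : Euc N × ℝ ↦ upperLim (valueFamily A f g ℓ u0) (w.1, y, w.2)) (univ ×ˢ Ioi 0) := by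
  rintro ⟨x, t⟩ ⟨-, ht⟩ c hc
  have hcont : Continuous fun w : Euc N × ℝ ↦ (w.1, y, w.2) := by fun_prop
  exact nhdsWithin_le_nhds ((hcont.tendsto (x, t)).eventually
    (upperSemicontinuousAt_upperLim (isBoundedUnder_abs_valueFamily H C x y ht) c hc))

lemma eventually_upperLim_valueFamily_lt (x : Euc N) (y : Euc M) {c : ℝ}
    (hc : ⨅ y, u0 x y < c) : ∀ᶠ w : Euc N × ℝ in 𝓝[{w | 0 < w.2}] (x, 0),
      upperLim (valueFamily A f g ℓ u0) (w.1, y, w.2) < c := by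
  obtain ⟨y', hy'⟩ := exists_lt_of_ciInf_lt hc
  obtain ⟨c', hc', hc'c⟩ := exists_between hy'
  obtain ⟨r, hr, hu⟩ := Metric.eventually_nhds_iff.1
    ((C.continuous.tendsto (x, y')).eventually_lt_const hc')
  obtain ⟨δ, hδ, hδr, hδc⟩ : ∃ δ > 0, δ < r ∧ δ < c - c' :=
    (exists_between (lt_min hr (sub_pos.2 hc'c))).imp fun δ h ↦ ⟨h.1, lt_min_iff.1 h.2⟩
  obtain ⟨s₀, hs₀, hsteer⟩ := exists_valueFun_le_add_near H C x y y' hδ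
  rw [eventually_nhdsWithin_iff]
  filter_upwards [ball_mem_nhds (x, (0 : ℝ)) (show 0 < min (δ / 4) (s₀ / 2) by positivity)]
  rintro ⟨x₁, t₁⟩ hw (ht₁ : 0 < t₁)
  rw [mem_ball, Prod.dist_eq, max_lt_iff, dist_eq_norm, Real.dist_eq, sub_zero] at hw
  simp only [lt_min_iff, abs_of_pos ht₁] at hw
  obtain ⟨⟨hx₁, -⟩, -, ht₁s⟩ := hw
  refine (upperLim_le_of_eventually_le (isBoundedUnder_abs_valueFamily H C x₁ y ht₁)
    (c := c' + δ) ?_).trans_lt (by linarith)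
  refine Metric.eventually_prod_nhds_iff.2 ⟨_, (hsteer (t₁ / 2) (half_pos ht₁)).and
    self_mem_nhdsWithin, min (δ / 4) (t₁ / 2), by positivity, ?_⟩
  rintro ε ⟨hε, hε0⟩ ⟨x₂, y₂, t₂⟩ hdist
  simp only [dist_mk_mk_lt_iff, lt_min_iff] at hdist
  obtain ⟨⟨hx₂, hy₂, -⟩, -, -, ht₂⟩ := hdist
  rw [abs_lt] at ht₂
  obtain ⟨z', hx', hy', hval⟩ := hε t₂ ⟨by linarith, by linarith⟩ t₂ le_rfl (x₂, y₂)
    (by linarith [norm_sub_le_norm_sub_add_norm_sub x₂ x₁ x]) (by simp only; linarith)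
  rw [sub_self] at hval
  have hu' : u0 z'.1 z'.2 < c' := hu (y := z') (by
    rw [Prod.dist_eq, dist_eq_norm, dist_eq_norm]
    exact max_lt (by linarith) (by linarith))
  simp only [valueFamily] at hval ⊢
  linarith [valueFun_zero_le H C hε0 z']

end WeakSemilimit

section Derivative

variable {E : Type*} [NormedAddCommGroup E] [NormedSpace ℝ E] [CompleteSpace E]

lemma nonneg_add_fderiv_of_isLocalMinOn {v : E → E} {K : NNReal} (hv : LipschitzWith K v)
    {L φ : E → ℝ} (hL : Continuous L) {z : E} (hφ : DifferentiableAt ℝ φ z)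
    (hmin : IsLocalMinOn (fun s ↦ (∫ r in 0..s, L (semiflow v z r)) + φ (semiflow v z s))
      (Ici 0) 0) :
    0 ≤ L z + fderiv ℝ φ z (v z) := by
  have hγ := hasDerivWithinAt_semiflow hv z le_rfl
  rw [semiflow_zero hv] at hγ
  have hLγ : Continuous fun r ↦ L (semiflow v z r) := hL.comp (continuous_semiflow hv z)
  have hint := (hLγ.integral_hasStrictDerivAt 0 0).hasDerivAt.hasDerivWithinAt (s := Ici 0)
  have hφγ : HasDerivWithinAt (φ ∘ semiflow v z) (fderiv ℝ φ z (v z)) (Ici 0) 0 :=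
    HasFDerivAt.comp_hasDerivWithinAt 0 (by simpa [semiflow_zero hv] using hφ.hasFDerivAt) hγ
  have hone : (1 : ℝ) ∈ posTangentConeAt (Ici 0) 0 :=
    mem_posTangentConeAt_of_segment_subset <| by
      simpa [segment_eq_Icc] using Icc_subset_Ici_self
  simpa [semiflow_zero hv] using
    hmin.hasFDerivWithinAt_nonneg (hint.add hφγ).hasFDerivWithinAt hone

lemma exists_integral_le_and_nonpos {h : ℝ → ℝ} (hh : Continuous h) {T : ℝ} (hT : 0 ≤ T)
    (hneg : ∫ s in 0..T, h s < 0) :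
    ∃ t ∈ Icc 0 T, ∫ s in 0..t, h s ≤ ∫ s in 0..T, h s ∧ h t ≤ 0 := by
  obtain ⟨t, ht, hmin⟩ := isCompact_Icc.exists_isMinOn (nonempty_Icc.2 hT)
    (intervalIntegral.continuous_primitive (μ := volume)
      (fun a b ↦ hh.intervalIntegrable a b) 0).continuousOn
  have hle : ∫ s in 0..t, h s ≤ ∫ s in 0..T, h s := hmin (right_mem_Icc.2 hT)
  refine ⟨t, ht, hle, ?_⟩
  have ht0 : 0 < t := ht.1.lt_of_ne fun h0 ↦ by
    rw [← h0, intervalIntegral.integral_same] at hle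
    linarith
  have hcone : 0 - t ∈ posTangentConeAt (Icc 0 T) t :=
    sub_mem_posTangentConeAt_of_segment_subset <|
      (convex_Icc 0 T).segment_subset ht (left_mem_Icc.2 hT)
  have hderiv := (hh.integral_hasStrictDerivAt 0 t).hasDerivAt.hasDerivWithinAt (s := Icc 0 T)
  have hnonneg : 0 ≤ (0 - t) * h t := by
    simpa using hmin.localize.hasFDerivWithinAt_nonneg hderiv.hasFDerivWithinAt hcone
  nlinarith

end Derivative

namespace ControlWord

variable {ι E : Type*} [NormedAddCommGroup E] [NormedSpace ℝ E]

/-- The infimum of the costs of all words from `z`, with no constraint on duration or endpoint. It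
equals the junk value `0` where these costs are unbounded below. -/
noncomputable def optimalCost (v : ι → E → E) (L : ι → E → ℝ) (z : E) : ℝ :=
  ⨅ w, cost v L w z

variable {v : ι → E → E} {L : ι → E → ℝ} {z : E}

lemma optimalCost_le_integral_add (hz : BddBelow (range fun w ↦ cost v L w z)) (i : ι) {s : ℝ}
    (hs : 0 ≤ s) :
    optimalCost v L z ≤
      (∫ r in 0..s, L i (semiflow (v i) z r)) + optimalCost v L (semiflow (v i) z s) := by
  rw [← sub_le_iff_le_add']
  refine le_ciInf fun w ↦ sub_le_iff_le_add'.2 ?_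
  exact ciInf_le hz ((i, ⟨s, hs⟩) :: w)

variable [CompleteSpace E] {K : NNReal}

/-- Cutting a word where the accumulated cost is minimal leaves it at a point of nonpositive
running cost. -/
lemma exists_cost_le_and_nonpos_of_cost_neg (hv : ∀ i, LipschitzWith K (v i))
    (hL : ∀ i, Continuous (L i)) {w : ControlWord ι} (hw : cost v L w z < 0) :
    ∃ w', cost v L w' z ≤ cost v L w z ∧ ∃ i, L i (endpoint v w' z) ≤ 0 := by
  induction w generalizing z with
  | nil => exact (lt_irrefl _ hw).elim
  | cons l w ih =>
    rcases lt_or_ge (cost v L w (semiflow (v l.1) z l.2)) 0 with hneg | hnonneg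
    · obtain ⟨w', hcost, hend⟩ := ih hneg
      exact ⟨l :: w', add_le_add_right hcost _, hend⟩
    · simp only [cost] at hw
      obtain ⟨t, ht, hle, hnonpos⟩ := exists_integral_le_and_nonpos
        ((hL l.1).comp (continuous_semiflow (hv l.1) z)) l.2.coe_nonneg
        ((le_add_of_nonneg_right hnonneg).trans_lt hw)
      refine ⟨[(l.1, ⟨t, ht.1⟩)], ?_, l.1, hnonpos⟩
      simp only [cost, add_zero]
      exact hle.trans (le_add_of_nonneg_right hnonneg)

end ControlWord

section SubsolutionLevels

lemma bddBelow_subsolLevels {m : ℕ} {F : Euc m → Euc m → ℝ} {c : ℝ}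
    (hF : ∀ y ∈ closedBall 0 1, ∀ q, c ≤ F y q) : BddBelow (subsolLevels F) := by
  refine ⟨c, ?_⟩
  rintro b ⟨u, husc, hu⟩
  have husc : UpperSemicontinuousOn u (closedBall 0 1) := husc.mono (subset_univ _)
  have hcomp := isCompact_closedBall (0 : Euc m) 1
  have h0 : (0 : Euc m) ∈ closedBall 0 1 := mem_closedBall_self zero_le_one
  obtain ⟨y₁, -, hmax₁⟩ := husc.exists_isMaxOn ⟨0, h0⟩ hcomp
  -- this slope pushes the maximum of `u - ψ` off the unit sphere
  set ψ : Euc m → ℝ := fun y ↦ (u y₁ - u 0 + 1) * ‖y‖ ^ 2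
  have hψ : ContDiff ℝ 1 ψ := contDiff_const.mul (contDiff_norm_sq ℝ)
  have hsub : UpperSemicontinuousOn (fun y ↦ u y - ψ y) (closedBall 0 1) := by
    simpa only [sub_eq_add_neg, Pi.neg_apply] using
      husc.add (hψ.continuous.neg.upperSemicontinuous.upperSemicontinuousOn _)
  obtain ⟨y₂, hy₂, hmax₂⟩ := hsub.exists_isMaxOn ⟨0, h0⟩ hcomp
  have hnorm : ‖y₂‖ < 1 := by
    refine (mem_closedBall_zero_iff.1 hy₂).lt_of_ne fun hone ↦ ?_
    have hle₁ : u y₂ ≤ u y₁ := hmax₁ hy₂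
    have hle₂ : u 0 - ψ 0 ≤ u y₂ - ψ y₂ := hmax₂ h0
    simp only [ψ, hone, norm_zero] at hle₂
    linarith
  have hloc : IsLocalMaxOn (fun y ↦ u y - ψ y) univ y₂ := by
    refine (hmax₂.isLocalMax ?_).on univ
    exact mem_of_superset (isOpen_ball.mem_nhds (mem_ball_zero_iff.2 hnorm)) ball_subset_closedBall
  exact (hF y₂ hy₂ _).trans (hu ψ hψ y₂ (mem_univ _) hloc)

end SubsolutionLevels

section CellProblem

/-- The running cost of the cell problem at momentum `p` and level `b`: a control has
`-⟪p, f⟫ - ⟪q, g⟫ - ℓ ≤ b`, as in the Hamiltonian, iff this cost plus `⟪q, g⟫` is nonnegative. -/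
noncomputable def cellCost {N M k : ℕ} {A : Set (Euc k)} (f : Euc N → Euc M → Euc k → Euc N)
    (ℓ : Euc N → Euc M → Euc k → ℝ) (p : Euc N) (b : ℝ) (a : A) (z : Euc N × Euc M) : ℝ :=
  ℓ z.1 z.2 a + ⟪p, f z.1 z.2 a⟫ + b

variable {N M k : ℕ} {A : Set (Euc k)} {f : Euc N → Euc M → Euc k → Euc N}
  {g : Euc N → Euc M → Euc k → Euc M} {ℓ : Euc N → Euc M → Euc k → ℝ} {L : NNReal} {Q : ℝ}
  (H : IsControlSystem A f g ℓ L Q) (x p : Euc N) {b : ℝ}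
include H

lemma abs_inner_field_le (a : A) (z : Euc N × Euc M) : |⟪p, f z.1 z.2 a⟫| ≤ ‖p‖ * Q :=
  (abs_real_inner_le_norm _ _).trans (by gcongr; exact H.fst_bounded _ _ a a.2)

lemma continuous_cellCost (b : ℝ) (a : A) : Continuous (cellCost f ℓ p b a) :=
  ((continuous_cost_of_mem H a).add (continuous_const.inner (continuous_fst_field H a))).add
    continuous_const

lemma exists_cellCost_le (b : ℝ) {S : Set (Euc N × Euc M)} (hS : IsCompact S) :
    ∃ C ≥ 0, ∀ a : A, ∀ z ∈ S, cellCost f ℓ p b a z ≤ C := by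
  obtain ⟨m, hm0, hm⟩ := exists_abs_cost_le H hS
  have hpQ : 0 ≤ ‖p‖ * Q := mul_nonneg (norm_nonneg p) H.Q_nonneg
  refine ⟨m + ‖p‖ * Q + |b|, by positivity, fun a z hz ↦ ?_⟩
  exact add_le_add (add_le_add ((le_abs_self _).trans (hm z hz a a.2))
    ((le_abs_self _).trans (abs_inner_field_le H p a z))) (le_abs_self b)

lemma exists_norm_le_of_cellCost_nonpos (b : ℝ) :
    ∃ R, ∀ (a : A) (y : Euc M), cellCost f ℓ p b a (x, y) ≤ 0 → ‖y‖ ≤ R := by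
  obtain ⟨R, hR⟩ := H.cost_coercive {x} isCompact_singleton (‖p‖ * Q + |b|)
  refine ⟨R, fun a y hy ↦ le_of_not_gt fun hRy ↦ ?_⟩
  have hℓ := hR y hRy x rfl a a.2
  have hf := neg_le_of_abs_le (abs_inner_field_le H p a (x, y))
  simp only [cellCost] at hy hf
  linarith [neg_abs_le b]

lemma exists_le_ham {S : Set (Euc N × Euc M)} (hS : IsCompact S) :
    ∃ c, ∀ z ∈ S, ∀ q, c ≤ Ham A f g ℓ z.1 z.2 p q := by
  obtain ⟨C, hC0, hC⟩ := exists_cellCost_le H p 0 hS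
  obtain ⟨c, hc, G, hG⟩ := exists_inner_le_and_norm_le H hS
  refine ⟨-C, fun z hz q ↦ ?_⟩
  obtain ⟨a, ha, -⟩ := hG z hz q
  have hval : -C ≤ -⟪p, f z.1 z.2 a⟫ - ⟪q, g z.1 z.2 a⟫ - ℓ z.1 z.2 a := by
    have hcost := hC a z hz
    have hcq : 0 ≤ c * ‖q‖ := by positivity
    simp only [cellCost] at hcost
    linarith
  -- `g` need not be bounded in the control, so the supremum may be the junk value `0`
  by_cases hbdd : BddAbove ((fun a ↦ -⟪p, f z.1 z.2 a⟫ - ⟪q, g z.1 z.2 a⟫ - ℓ z.1 z.2 a) '' A)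
  · exact hval.trans (le_csSup hbdd ⟨a, a.2, rfl⟩)
  · rw [Ham, Real.sSup_of_not_bddAbove hbdd]
    exact neg_nonpos.2 hC0

lemma semiflow_slowFastField_zero (a : A) (z : Euc N × Euc M) {t : ℝ} (ht : 0 ≤ t) :
    semiflow (slowFastField f g 0 a) z t = (z.1, (semiflow (slowFastField f g 0 a) z t).2) := by
  have h := norm_semiflow_slowFastField_fst_sub_le H 0 a z ht
  rw [abs_zero, zero_mul, zero_mul, norm_le_zero_iff, sub_eq_zero] at h
  exact Prod.ext h rfl

lemma mem_subsolLevels_of_bddBelow_cost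
    (hb : ∀ y : Euc M, BddBelow (range fun w ↦
      cost (slowFastField f g 0) (cellCost (A := A) f ℓ p b) w (x, y))) :
    b ∈ subsolLevels (fun y q : Euc M ↦ Ham A f g ℓ x y p q) := by
  set v := slowFastField (A := A) f g 0
  set U := optimalCost v (cellCost f ℓ p b)
  have hv := lipschitzWith_slowFastField H 0
  have hL := continuous_cellCost H p b
  refine ⟨fun y ↦ U (x, y), UpperSemicontinuous.upperSemicontinuousOn ?_ _,
    fun ψ hψ y _ hmax ↦ csSup_le (H.nonempty.image _) ?_⟩
  · refine upperSemicontinuous_ciInf hb fun w ↦ Continuous.upperSemicontinuous ?_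
    exact (continuous_cost (continuous_semiflow_slowFastField H) hL w).comp
      (by fun_prop : Continuous fun y : Euc M ↦ ((0 : ℝ), x, y))
  · rintro _ ⟨a, ha, rfl⟩
    lift a to A using ha
    have hψ' : DifferentiableAt ℝ ψ y := hψ.differentiable one_ne_zero y
    have hφ : HasFDerivAt (fun z : Euc N × Euc M ↦ ψ z.2)
        (fderiv ℝ ψ y ∘L .snd ℝ (Euc N) (Euc M)) (x, y) :=
      HasFDerivAt.comp (x, y) (g := ψ) hψ'.hasFDerivAt hasFDerivAt_snd
    have hmin : IsLocalMinOn (fun s ↦ (∫ r in 0..s, cellCost f ℓ p b a (semiflow (v a) (x, y) r)) +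
        ψ (semiflow (v a) (x, y) s).2) (Ici 0) 0 := by
      have hγ : Tendsto (fun s ↦ (semiflow (v a) (x, y) s).2) (𝓝[≥] 0) (𝓝 y) := by
        have hcont := continuous_snd.comp (continuous_semiflow (hv a) (x, y))
        simpa [Function.comp_def, semiflow_zero (hv a)] using
          (hcont.tendsto 0).mono_left nhdsWithin_le_nhds
      rw [IsLocalMaxOn, nhdsWithin_univ] at hmax
      filter_upwards [hγ.eventually hmax, self_mem_nhdsWithin] with s hs (hs0 : 0 ≤ s)
      have hdpp := optimalCost_le_integral_add (hb y) a hs0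
      rw [semiflow_slowFastField_zero H a (x, y) hs0] at hdpp
      simp only [v, U, intervalIntegral.integral_same, semiflow_zero (hv a)] at hs hdpp ⊢
      linarith
    have hnonneg := nonneg_add_fderiv_of_isLocalMinOn (hv a) (hL a) hφ.differentiableAt hmin
    rw [hφ.fderiv] at hnonneg
    simp only [cellCost, slowFastField, ContinuousLinearMap.comp_apply,
      ContinuousLinearMap.coe_snd', ← inner_gradient_left] at hnonneg
    beta_reduce
    linarith

lemma exists_not_bddBelow_cost (hb : b < effH A f g ℓ x p) :
    ∃ y : Euc M, ¬BddBelow (range fun w ↦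
      cost (slowFastField f g 0) (cellCost (A := A) f ℓ p b) w (x, y)) := by
  by_contra! hbdd
  obtain ⟨c, hc⟩ := exists_le_ham H p
    (isCompact_singleton (x := x) |>.prod (isCompact_closedBall (0 : Euc M) 1))
  exact notMem_of_lt_csInf hb (bddBelow_subsolLevels fun y hy ↦ hc (x, y) ⟨rfl, hy⟩)
    (mem_subsolLevels_of_bddBelow_cost H x p hbdd)

end CellProblem

section CompactUpperBound

variable {Z : Type*} [TopologicalSpace Z] [FirstCountableTopology Z] {V : ℝ → Z → ℝ}

lemma eventually_forall_lt_of_upperLim_lt {K : Set Z} (hK : IsCompact K)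
    (hV : ∀ z ∈ K, (𝓝[>] (0 : ℝ) ×ˢ 𝓝 z).IsBoundedUnder (· ≤ ·) fun p ↦ |V p.1 p.2|)
    {φ : Z → ℝ} (hφ : Continuous φ) (hlt : ∀ z ∈ K, upperLim V z < φ z) :
    ∀ᶠ ε in 𝓝[>] (0 : ℝ), ∀ z ∈ K, V ε z < φ z := by
  have hprod : ∀ᶠ p in 𝓝[>] (0 : ℝ) ×ˢ 𝓝ˢ K, V p.1 p.2 < φ p.2 := by
    refine hK.mem_prod_nhdsSet_of_forall fun z hz ↦ ?_
    obtain ⟨c, hc, hcφ⟩ := exists_between (hlt z hz)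
    filter_upwards [eventually_lt_of_upperLim_lt (hV z hz) hc,
      tendsto_snd.eventually ((hφ.tendsto z).eventually_const_lt hcφ)] with p hVc hcφ
    exact hVc.trans hcφ
  obtain ⟨P, hP, S, hS, hPS⟩ := eventually_prod_iff.1 hprod
  filter_upwards [hP] with ε hε z hz
  exact hPS hε (subset_of_mem_nhdsSet hS hz)

end CompactUpperBound

section BackwardGrowth

variable {F : Type*} [NormedAddCommGroup F] [InnerProductSpace ℝ F]

/-- The first-order bound with spatial slope `p` and time slope `-b` holds for the increments of `ψ`
in `S` that go backward in time at spatial speed at most `Q`. -/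
def BackwardGrowthLE (ψ : F × ℝ → ℝ) (p : F) (b Q : ℝ) (S : Set (F × ℝ)) : Prop :=
  ∀ v ∈ S, ∀ v' ∈ S, v'.2 ≤ v.2 → ‖v'.1 - v.1‖ ≤ Q * (v.2 - v'.2) →
    ψ v' - ψ v ≤ ⟪p, v'.1 - v.1⟫ + b * (v.2 - v'.2)

variable [CompleteSpace F]

lemma fderiv_eq_inner_gradient_add_deriv {ψ : F × ℝ → ℝ} {x : F} {t : ℝ}
    (hψ : DifferentiableAt ℝ ψ (x, t)) (v : F × ℝ) :
    fderiv ℝ ψ (x, t) v =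
      ⟪gradient (fun x ↦ ψ (x, t)) x, v.1⟫ + v.2 * deriv (fun s ↦ ψ (x, s)) t := by
  have hx : HasFDerivAt (fun x ↦ ψ (x, t)) _ x :=
    HasFDerivAt.comp x hψ.hasFDerivAt (hasFDerivAt_prodMk_left x t)
  have ht : HasFDerivAt (fun s ↦ ψ (x, s)) _ t :=
    HasFDerivAt.comp t hψ.hasFDerivAt (hasFDerivAt_prodMk_right x t)
  rw [inner_gradient_left, hx.fderiv, ht.hasDerivAt.deriv, ← smul_eq_mul, ← map_smul]
  simp only [ContinuousLinearMap.comp_apply, ContinuousLinearMap.inl_apply,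
    ContinuousLinearMap.inr_apply, ← map_add]
  simp

lemma eventually_backwardGrowthLE {ψ : F × ℝ → ℝ} (hψ : ContDiff ℝ 1 ψ) {x : F} {t b Q : ℝ}
    (hQ : 0 ≤ Q) (hb : -deriv (fun s ↦ ψ (x, s)) t < b) :
    ∀ᶠ r in 𝓝 (0 : ℝ),
      BackwardGrowthLE ψ (gradient (fun x ↦ ψ (x, t)) x) b Q (closedBall (x, t) r) := by
  set τ := deriv (fun s ↦ ψ (x, s)) t
  obtain ⟨κ, hκ, hκQ⟩ : ∃ κ > 0, κ * (Q + 1) = b + τ :=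
    ⟨(b + τ) / (Q + 1), div_pos (by linarith) (by positivity), by field_simp⟩
  have hstrict := (hψ.contDiffAt.hasStrictFDerivAt (x := (x, t)) one_ne_zero).isLittleO.def hκ
  rw [nhds_prod_eq] at hstrict
  obtain ⟨S, hS, hψS⟩ := mem_prod_same_iff.1 hstrict
  filter_upwards [eventually_closedBall_subset hS] with r hr v hv v' hv' hle hspeed
  have hbound : ψ v' - ψ v - fderiv ℝ ψ (x, t) (v' - v) ≤ κ * ‖v' - v‖ :=
    (le_abs_self _).trans (hψS (mk_mem_prod (hr hv') (hr hv)))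
  have htime : 0 ≤ v.2 - v'.2 := sub_nonneg.2 hle
  have hnorm : ‖v' - v‖ ≤ (Q + 1) * (v.2 - v'.2) := by
    rw [Prod.norm_def, Prod.fst_sub, Prod.snd_sub, Real.norm_eq_abs, abs_sub_comm,
      abs_of_nonneg htime]
    exact max_le (by linarith) (by nlinarith)
  have hκnorm := mul_le_mul_of_nonneg_left hnorm hκ.le
  rw [← mul_assoc, hκQ] at hκnorm
  simp only [fderiv_eq_inner_gradient_add_deriv (hψ.differentiable one_ne_zero _),
    Prod.fst_sub, Prod.snd_sub] at hbound
  linarith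

end BackwardGrowth

lemma exists_iterate_of_step {X W : Type*} [PseudoMetricSpace X] {π : W → X} {c : X}
    {r d e : ℝ} {P : W → Prop} {F : W → ℝ} (hd : 0 ≤ d)
    (hstep : ∀ w, P w → dist (π w) c + d ≤ r → ∃ w', P w' ∧ dist (π w') (π w) ≤ d ∧
      F w + e ≤ F w') (n : ℕ) {w : W} (hw : P w) (hn : dist (π w) c + n * d ≤ r) :
    ∃ w', P w' ∧ dist (π w') c ≤ r ∧ F w + n * e ≤ F w' := by
  induction n generalizing w with
  | zero => exact ⟨w, hw, by simpa using hn, by simp⟩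
  | succ n ih =>
    push_cast at hn ⊢
    have hnd : 0 ≤ n * d := by positivity
    obtain ⟨w₁, hw₁, hdist, hF⟩ := hstep w hw (by linarith)
    obtain ⟨w', hw', hdist', hF'⟩ := ih hw₁ (by linarith [dist_triangle (π w₁) (π w) c])
    exact ⟨w', hw', hdist', by linarith⟩

/-- Every point within `ρ` of `(x, y)` starts a control word of duration at most `T` which brings
the fast variable back within `ρ` of `y` and along which `cellCost` integrates to at most `-1`. -/
def HasNegativeLoops {N M k : ℕ} (A : Set (Euc k)) (f : Euc N → Euc M → Euc k → Euc N)
    (g : Euc N → Euc M → Euc k → Euc M) (ℓ : Euc N → Euc M → Euc k → ℝ) (p : Euc N)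
    (b ε T ρ : ℝ) (x : Euc N) (y : Euc M) : Prop :=
  ∀ z : Euc N × Euc M, ‖z.1 - x‖ ≤ ρ → ‖z.2 - y‖ ≤ ρ → ∃ w : ControlWord A, duration w ≤ T ∧
    cost (slowFastField f g ε) (cellCost f ℓ p b) w z ≤ -1 ∧
    ‖(endpoint (slowFastField f g ε) w z).2 - y‖ ≤ ρ

section Loops

variable {N M k : ℕ} {A : Set (Euc k)} {f : Euc N → Euc M → Euc k → Euc N}
  {g : Euc N → Euc M → Euc k → Euc M} {ℓ : Euc N → Euc M → Euc k → ℝ} {L : NNReal} {Q : ℝ}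
  (H : IsControlSystem A f g ℓ L Q) (x p : Euc N)
include H

lemma fst_endpoint_slowFastField_zero (w : ControlWord A) (z : Euc N × Euc M) :
    (endpoint (slowFastField f g 0) w z).1 = z.1 := by
  simpa [sub_eq_zero] using norm_endpoint_slowFastField_fst_sub_le H 0 w z

lemma exists_word_cost_lt_and_norm_le (b : ℝ) :
    ∃ R, ∀ y : Euc M,
      ¬BddBelow (range fun w ↦ cost (slowFastField f g 0) (cellCost (A := A) f ℓ p b) w (x, y)) →
      ∀ c, ∃ w : ControlWord A, cost (slowFastField f g 0) (cellCost f ℓ p b) w (x, y) < c ∧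
        ‖(endpoint (slowFastField f g 0) w (x, y)).2‖ ≤ R := by
  obtain ⟨R, hR⟩ := exists_norm_le_of_cellCost_nonpos H x p b
  refine ⟨R, fun y hy c ↦ ?_⟩
  obtain ⟨_, ⟨w, rfl⟩, hw⟩ := not_bddBelow_iff.1 hy (min c 0)
  obtain ⟨hwc, hw0⟩ := lt_min_iff.1 hw
  obtain ⟨w', hle, a, ha⟩ := exists_cost_le_and_nonpos_of_cost_neg
    (lipschitzWith_slowFastField H 0) (continuous_cellCost H p b) hw0
  refine ⟨w', hle.trans_lt hwc, hR a _ ?_⟩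
  rwa [← Prod.mk.eta (p := endpoint _ w' _), fst_endpoint_slowFastField_zero H] at ha

lemma exists_return_word (b : ℝ) (y : Euc M) {R : ℝ} (hR : 0 ≤ R) :
    ∃ D ≥ 0, ∃ C, ∀ ρ > 0, ρ ≤ R → ∀ ε, |ε| * Q * D ≤ 1 / 2 → ∀ z : Euc N × Euc M,
      ‖z.1 - x‖ ≤ 1 / 2 → ‖z.2 - y‖ ≤ R → ∃ w : ControlWord A, duration w = D ∧
        cost (slowFastField f g ε) (cellCost f ℓ p b) w z ≤ C ∧
        ‖(endpoint (slowFastField f g ε) w z).2 - y‖ ≤ ρ := by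
  obtain ⟨c, hc, hsteer⟩ := exists_steering_word H x y 1 R
  obtain ⟨C, -, hC⟩ := exists_cellCost_le H p b
    ((isCompact_closedBall x 1).prod (isCompact_closedBall y R))
  refine ⟨R / c, by positivity, C * (R / c), fun ρ hρ hρR ε hε z hx hy ↦ ?_⟩
  obtain ⟨w, hw, hstay, hend⟩ := hsteer ρ hρ hρR ε (R / c) (by positivity) z (by linarith) hy
  refine ⟨w, hw, ?_, hend.trans (max_le le_rfl ?_)⟩
  · exact hw ▸ cost_le_of_staysIn (lipschitzWith_slowFastField H ε)
      (continuous_cellCost H p b) hC hstay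
  · rw [mul_div_cancel₀ R hc.ne']
    linarith

lemma exists_eventually_cost_lt_and_endpoint_mem (b : ℝ) (w : ControlWord A)
    {z : Euc N × Euc M} {c : ℝ} (hc : cost (slowFastField f g 0) (cellCost f ℓ p b) w z < c)
    {U : Set (Euc N × Euc M)} (hU : IsOpen U) (hz : endpoint (slowFastField f g 0) w z ∈ U) :
    ∃ r > 0, ∀ᶠ ε in 𝓝 (0 : ℝ), ∀ z', dist z' z < r →
      cost (slowFastField f g ε) (cellCost f ℓ p b) w z' < c ∧
        endpoint (slowFastField f g ε) w z' ∈ U := by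
  have hflow := continuous_semiflow_slowFastField H
  have hcost := (continuous_cost hflow (continuous_cellCost H p b) w).tendsto (0, z)
  have hend := (continuous_endpoint hflow w).tendsto (0, z)
  have hnear := (hcost.eventually_lt_const hc).and (hend.eventually (hU.mem_nhds hz))
  rw [nhds_prod_eq, Metric.eventually_prod_nhds_iff] at hnear
  obtain ⟨P, hP, r, hr, hPr⟩ := hnear
  exact ⟨r, hr, hP.mono fun ε hε z' hz' ↦ hPr hε hz'⟩

lemma eventually_hasNegativeLoops {b : ℝ} (hb : b < effH A f g ℓ x p) :
    ∃ y : Euc M, ∃ T > 0, ∃ ρ > 0, ∀ᶠ ε in 𝓝[>] (0 : ℝ),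
      HasNegativeLoops A f g ℓ p b ε T ρ x y := by
  obtain ⟨y, hy⟩ := exists_not_bddBelow_cost H x p hb
  obtain ⟨R, hR⟩ := exists_word_cost_lt_and_norm_le H x p b
  set R₁ := |R| + ‖y‖ + 1
  have hR₁ : 0 < R₁ := by positivity
  obtain ⟨D, hD, C, hreturn⟩ := exists_return_word H x p b y hR₁.le
  obtain ⟨w, hcost, hend⟩ := hR y hy (-(C + 1))
  have hend_mem : endpoint (slowFastField f g 0) w (x, y) ∈ ball x (1 / 2) ×ˢ ball y R₁ := by
    refine ⟨?_, ?_⟩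
    · rw [fst_endpoint_slowFastField_zero H]
      exact mem_ball_self (by norm_num)
    · rw [mem_ball_iff_norm]
      linarith [norm_sub_le (endpoint (slowFastField f g 0) w (x, y)).2 y, le_abs_self R]
  obtain ⟨r, hr, hnear⟩ := exists_eventually_cost_lt_and_endpoint_mem H p b w hcost
    (isOpen_ball.prod isOpen_ball) hend_mem
  refine ⟨y, duration w + D + 1, by linarith [duration_nonneg w], min (r / 2) R₁, by positivity, ?_⟩
  filter_upwards [hnear.filter_mono nhdsWithin_le_nhds, self_mem_nhdsWithin,
    eventually_const_mul_le (Q * D) one_half_pos] with ε hε (hε0 : 0 < ε) hεD z hx hy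
  obtain ⟨hx, -⟩ := le_min_iff.1 hx
  obtain ⟨hy, -⟩ := le_min_iff.1 hy
  obtain ⟨hw, hw₁, hw₂⟩ := hε z (by
    rw [Prod.dist_eq, dist_eq_norm, dist_eq_norm]
    exact max_lt (by linarith) (by linarith))
  obtain ⟨w', hw', hcost', hend'⟩ := hreturn (min (r / 2) R₁) (by positivity) (min_le_right _ _)
    ε (by rw [abs_of_pos hε0]; linarith) _ (mem_ball_iff_norm.1 hw₁).le (mem_ball_iff_norm.1 hw₂).le
  refine ⟨w ++ w', ?_, ?_, ?_⟩
  · rw [duration_append]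
    linarith
  · rw [cost_append]
    linarith
  · rwa [endpoint_append]

end Loops

section Subsolution

variable {N M k : ℕ} {A : Set (Euc k)} {f : Euc N → Euc M → Euc k → Euc N}
  {g : Euc N → Euc M → Euc k → Euc M} {ℓ : Euc N → Euc M → Euc k → ℝ} {L : NNReal} {Q : ℝ}
  {u0 : Euc N → Euc M → ℝ} (H : IsControlSystem A f g ℓ L Q) {x p : Euc N} {y : Euc M}
  {b T ρ r t ε : ℝ} {ψ : Euc N × ℝ → ℝ}
include H

lemma mul_cost_cellCost (ε : ℝ) (w : ControlWord A) (z : Euc N × Euc M) :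
    ε * cost (slowFastField f g ε) (cellCost f ℓ p b) w z =
      ε * cost (slowFastField f g ε) (fun a z ↦ ℓ z.1 z.2 a) w z +
        ⟪p, (endpoint (slowFastField f g ε) w z).1 - z.1⟫ + b * (ε * duration w) := by
  have hv := lipschitzWith_slowFastField H ε
  have hℓ := continuous_cost_of_mem H
  have hf (a : A) : Continuous fun z : Euc N × Euc M ↦ ⟪p, f z.1 z.2 a⟫ :=
    continuous_const.inner (continuous_fst_field H a)
  have hsum (a : A) : Continuous fun z : Euc N × Euc M ↦ ℓ z.1 z.2 a + ⟪p, f z.1 z.2 a⟫ :=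
    (hℓ a).add (hf a)
  have hslow : ε * cost (slowFastField f g ε) (fun a z ↦ ⟪p, f z.1 z.2 a⟫) w z =
      ⟪p, (endpoint (slowFastField f g ε) w z).1 - z.1⟫ := by
    rw [← cost_const_mul, inner_sub_right]
    refine Eq.trans ?_ (cost_map_eq_sub hv (innerSL ℝ p ∘L .fst ℝ (Euc N) (Euc M)) w z)
    simp [slowFastField]
  unfold cellCost
  rw [cost_add hv hsum (fun _ ↦ continuous_const), cost_add hv hℓ hf,
    cost_const, ← hslow]
  ring

variable (C : IsInitialDatum u0 Q)
include C

lemma exists_valueFamily_sub_add_le_of_hasNegativeLoops (hε : 0 < ε) (hT : 0 ≤ T)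
    (hloops : HasNegativeLoops A f g ℓ p b ε T ρ x y) (hrρ : r ≤ ρ) (hrt : r ≤ t)
    (hψ : BackwardGrowthLE ψ p b Q (closedBall (x, t) r)) {w : Euc N × Euc M × ℝ}
    (hy : ‖w.2.1 - y‖ ≤ ρ) (hw : dist (w.1, w.2.2) (x, t) + ε * T * (Q + 1) ≤ r) :
    ∃ w' : Euc N × Euc M × ℝ, ‖w'.2.1 - y‖ ≤ ρ ∧
      dist (w'.1, w'.2.2) (w.1, w.2.2) ≤ ε * T * (Q + 1) ∧
      valueFamily A f g ℓ u0 ε w - ψ (w.1, w.2.2) + ε ≤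
        valueFamily A f g ℓ u0 ε w' - ψ (w'.1, w'.2.2) := by
  have hQ := H.Q_nonneg
  obtain ⟨hdx, hdt⟩ := max_le_iff.1 (Prod.dist_eq (x := (w.1, w.2.2)) (y := (x, t))).ge
  have hd : 0 ≤ ε * T * (Q + 1) := by positivity
  obtain ⟨u, huT, hcost, hend⟩ := hloops (w.1, w.2.1)
    (by rw [← dist_eq_norm]; simp only at hdx ⊢; linarith) hy
  set z' := endpoint (slowFastField f g ε) u (w.1, w.2.1)
  set s := ε * duration u
  have hs0 : 0 ≤ s := mul_nonneg hε.le (duration_nonneg u)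
  have hsT : s ≤ ε * T := mul_le_mul_of_nonneg_left huT hε.le
  have hslow : ‖z'.1 - w.1‖ ≤ Q * s := by
    have h := norm_endpoint_slowFastField_fst_sub_le H ε u (w.1, w.2.1)
    rw [abs_of_pos hε] at h
    linarith
  have hmove : dist (z'.1, w.2.2 - s) (w.1, w.2.2) ≤ ε * T * (Q + 1) := by
    rw [Prod.dist_eq, dist_eq_norm, Real.dist_eq, sub_sub_cancel_left, abs_neg, abs_of_nonneg hs0]
    exact max_le (by nlinarith) (by nlinarith)
  refine ⟨(z'.1, z'.2, w.2.2 - s), hend, hmove, ?_⟩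
  have hst : s ≤ w.2.2 := by
    rw [Real.dist_eq, abs_le] at hdt
    simp only at hdt
    nlinarith
  have hdpp := valueFun_le_cost_add_valueFun H C hε u (w.1, w.2.1) hst
  have hsplit := mul_cost_cellCost H (p := p) (b := b) ε u (w.1, w.2.1)
  have hgrowth := hψ (w.1, w.2.2) (by rw [mem_closedBall]; linarith) (z'.1, w.2.2 - s)
    (mem_closedBall.2 <| (dist_triangle _ _ _).trans (by linarith))
    (sub_le_self _ hs0) (by simpa using hslow)
  simp only [sub_sub_cancel] at hgrowth
  have hloop := mul_le_mul_of_nonneg_left hcost hε.le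
  simp only [valueFamily]
  linarith

lemma exists_gain_of_hasNegativeLoops (hT : 0 < T) (hr : 0 < r)
    (hloops : ∀ᶠ ε in 𝓝[>] (0 : ℝ), HasNegativeLoops A f g ℓ p b ε T ρ x y) (hrρ : r ≤ ρ)
    (hrt : r ≤ t) (hψ : BackwardGrowthLE ψ p b Q (closedBall (x, t) r)) :
    ∃ η > 0, ∀ᶠ ε in 𝓝[>] (0 : ℝ), ∀ w : Euc N × Euc M × ℝ, ‖w.2.1 - y‖ ≤ ρ →
      dist (w.1, w.2.2) (x, t) ≤ r / 2 → ∃ w' : Euc N × Euc M × ℝ, ‖w'.2.1 - y‖ ≤ ρ ∧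
        dist (w'.1, w'.2.2) (x, t) ≤ r ∧
        valueFamily A f g ℓ u0 ε w - ψ (w.1, w.2.2) + η ≤
          valueFamily A f g ℓ u0 ε w' - ψ (w'.1, w'.2.2) := by
  have hQ := H.Q_nonneg
  have hη : 0 < r / 2 / (T * (Q + 1)) / 2 := by positivity
  refine ⟨_, hη, ?_⟩
  filter_upwards [hloops, Ioc_mem_nhdsGT hη] with ε hε ⟨hε0, hεη⟩ w hy hw
  have hd : 0 < ε * T * (Q + 1) := by positivity
  -- loops last a time of order `ε` and gain `ε` each, so about `1 / ε` of them fit in the ball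
  set n := ⌊r / 2 / (ε * T * (Q + 1))⌋₊
  have hn : n * (ε * T * (Q + 1)) ≤ r / 2 :=
    (le_div_iff₀ hd).1 (Nat.floor_le (by positivity))
  have hgain : r / 2 / (T * (Q + 1)) / 2 ≤ n * ε := by
    have hlt : r / 2 / (T * (Q + 1)) < (n + 1) * ε := by
      rw [div_lt_iff₀ (by positivity)]
      linarith [(div_lt_iff₀ hd).1 (Nat.lt_floor_add_one (r / 2 / (ε * T * (Q + 1))))]
    linarith
  obtain ⟨w', hy', hw', hF⟩ := exists_iterate_of_step (W := Euc N × Euc M × ℝ)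
    (π := fun w ↦ (w.1, w.2.2)) (c := (x, t)) (r := r) (P := fun w ↦ ‖w.2.1 - y‖ ≤ ρ)
    (F := fun w ↦ valueFamily A f g ℓ u0 ε w - ψ (w.1, w.2.2)) hd.le
    (fun _ ↦ exists_valueFamily_sub_add_le_of_hasNegativeLoops H C hε0 hT.le hε hrρ hrt hψ)
    n hy (by linarith)
  exact ⟨w', hy', hw', by linarith⟩

lemma eventually_forall_valueFamily_lt_of_upperLim_le (hψ : Continuous ψ) (hrt : r < t) (y' : Euc M)
    {m : ℝ} (hm : ∀ v ∈ closedBall (x, t) r,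
      upperLim (valueFamily A f g ℓ u0) (v.1, y', v.2) - ψ v ≤ m) {δ : ℝ} (hδ : 0 < δ) :
    ∀ᶠ ε in 𝓝[>] (0 : ℝ), ∀ w : Euc N × Euc M × ℝ, ‖w.2.1 - y‖ ≤ ρ →
      dist (w.1, w.2.2) (x, t) ≤ r →
      valueFamily A f g ℓ u0 ε w < ψ (w.1, w.2.2) + m + δ := by
  set K : Set (Euc N × Euc M × ℝ) := closedBall x r ×ˢ closedBall y ρ ×ˢ closedBall t r
  have hK : IsCompact K :=
    (isCompact_closedBall x r).prod ((isCompact_closedBall y ρ).prod (isCompact_closedBall t r))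
  have hpos : ∀ w ∈ K, 0 < w.2.2 := fun w hw ↦ by
    have ht := hw.2.2
    rw [mem_closedBall, Real.dist_eq, abs_le] at ht
    linarith
  have hφ : Continuous fun w : Euc N × Euc M × ℝ ↦ ψ (w.1, w.2.2) + m + δ := by fun_prop
  have hev := eventually_forall_lt_of_upperLim_lt hK (V := valueFamily A f g ℓ u0)
    (fun w hw ↦ isBoundedUnder_abs_valueFamily H C w.1 w.2.1 (hpos w hw)) hφ fun w hw ↦ by
      have hwm := hm (w.1, w.2.2) (closedBall_prod_same x t r ▸ ⟨hw.1, hw.2.2⟩)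
      rw [upperLim_valueFamily_eq H C w.1 y' w.2.1 (hpos w hw)] at hwm
      linarith
  filter_upwards [hev] with ε hε w hy hw
  obtain ⟨hx, ht⟩ := (closedBall_prod_same x t r).symm ▸ mem_closedBall.2 hw
  exact hε w ⟨hx, mem_closedBall_iff_norm.2 hy, ht⟩

lemma le_neg_deriv_of_isLocalMaxOn (y' : Euc M) (hψ : ContDiff ℝ 1 ψ) (ht : 0 < t)
    (hmax : IsLocalMaxOn (fun v ↦ upperLim (valueFamily A f g ℓ u0) (v.1, y', v.2) - ψ v)
      (univ ×ˢ Ioi 0) (x, t))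
    (hb : b < effH A f g ℓ x (gradient (fun x ↦ ψ (x, t)) x)) :
    b ≤ -deriv (fun s ↦ ψ (x, s)) t := by
  by_contra! hτ
  obtain ⟨y, T, hT, ρ, hρ, hloops⟩ := eventually_hasNegativeLoops H x _ hb
  have hmax : IsLocalMax (fun v ↦ upperLim (valueFamily A f g ℓ u0) (v.1, y', v.2) - ψ v) (x, t) :=
    hmax.isLocalMax ((isOpen_univ.prod isOpen_Ioi).mem_nhds ⟨mem_univ x, ht⟩)
  obtain ⟨r, ⟨hgrowth, hball⟩, hr, hrmin⟩ :=
    (((eventually_backwardGrowthLE hψ H.Q_nonneg hτ).and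
      (eventually_closedBall_subset hmax)).filter_mono nhdsWithin_le_nhds |>.and
      (Ioo_mem_nhdsGT (lt_min hρ ht))).exists
  obtain ⟨hrρ, hrt⟩ := lt_min_iff.1 hrmin
  obtain ⟨η, hη, hgain⟩ := exists_gain_of_hasNegativeLoops (u0 := u0) H C hT hr hloops hrρ.le
    hrt.le hgrowth
  have hupper := eventually_forall_valueFamily_lt_of_upperLim_le (y := y) (ρ := ρ) H C hψ.continuous
    hrt y' (fun v hv ↦ hball hv) (half_pos hη)
  have hψnear : ∀ᶠ w : Euc N × Euc M × ℝ in 𝓝 (x, y, t), ψ (w.1, w.2.2) < ψ (x, t) + η / 4 :=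
    (hψ.continuous.comp (by fun_prop : Continuous fun w : Euc N × Euc M × ℝ ↦ (w.1, w.2.2))).tendsto
      _ |>.eventually_lt_const (by simp only [Function.comp_apply]; linarith)
  have hle : upperLim (valueFamily A f g ℓ u0) (x, y, t) ≤
      upperLim (valueFamily A f g ℓ u0) (x, y', t) - η / 4 := by
    refine upperLim_le_of_eventually_le (isBoundedUnder_abs_valueFamily H C x y ht) ?_
    filter_upwards [tendsto_fst.eventually (hgain.and hupper), tendsto_snd.eventually
      (hψnear.and (ball_mem_nhds (x, y, t) (lt_min hρ (half_pos hr))))]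
    rintro ⟨ε, x₁, y₁, t₁⟩ ⟨hgain, hupper⟩ ⟨hψw, hnear⟩
    simp only [dist_mk_mk_lt_iff, lt_min_iff] at hnear
    obtain ⟨⟨-, hy₁, -⟩, hx₁, -, ht₁⟩ := hnear
    obtain ⟨w', hy', hw', hV⟩ := hgain (x₁, y₁, t₁) hy₁.le (by
      rw [Prod.dist_eq, dist_eq_norm, Real.dist_eq]
      exact max_le hx₁.le ht₁.le)
    have hVw' := hupper w' hy' hw'
    simp only at hV hψw ⊢
    linarith
  rw [upperLim_valueFamily_eq H C x y y' ht] at hle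
  linarith

lemma isParabSubOn_upperLim_valueFamily (y : Euc M) :
    IsParabSubOn (effH A f g ℓ) (univ ×ˢ Ioi 0)
      (fun w : Euc N × ℝ ↦ upperLim (valueFamily A f g ℓ u0) (w.1, y, w.2)) := by
  refine ⟨upperSemicontinuousOn_upperLim_valueFamily H C y, ?_⟩
  rintro ψ hψ ⟨x, t⟩ ⟨-, ht⟩ hmax
  have hle : effH A f g ℓ x (gradient (fun x ↦ ψ (x, t)) x) ≤ -deriv (fun s ↦ ψ (x, s)) t :=
    le_of_forall_lt_imp_le_of_dense fun b hb ↦ le_neg_deriv_of_isLocalMaxOn H C y hψ ht hmax hb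
  linarith

end Subsolution

theorem statement0
    {N M k : ℕ} (A : Set (Euc k)) (hA : IsCompact A) (hAne : A.Nonempty)
    (f : Euc N → Euc M → Euc k → Euc N) (g : Euc N → Euc M → Euc k → Euc M)
    (L0 Q0 : ℝ) (hL0 : 0 < L0) (hQ0 : 0 < Q0)
    (hfLip : ∀ (x₁ x₂ : Euc N) (y₁ y₂ : Euc M), ∀ a ∈ A,
      ‖f x₁ y₁ a - f x₂ y₂ a‖ ≤ L0 * (‖x₁ - x₂‖ + ‖y₁ - y₂‖))
    (hgLip : ∀ (x₁ x₂ : Euc N) (y₁ y₂ : Euc M), ∀ a ∈ A,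
      ‖g x₁ y₁ a - g x₂ y₂ a‖ ≤ L0 * (‖x₁ - x₂‖ + ‖y₁ - y₂‖))
    (hfBdd : ∀ x y, ∀ a ∈ A, ‖f x y a‖ ≤ Q0)
    (hctrl : ∀ K : Set (Euc N × Euc M), IsCompact K → ∃ r > 0, ∀ z ∈ K,
      Metric.ball (0 : Euc M) r ⊆ closure (convexHull ℝ ((fun a => g z.1 z.2 a) '' A)))
    (ℓ : Euc N → Euc M → Euc k → ℝ)
    (hlCont : Continuous fun z : Euc N × Euc M × Euc k => ℓ z.1 z.2.1 z.2.2)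
    (hlCoer : ∀ B : Set (Euc N), IsCompact B → ∀ c : ℝ, ∃ R : ℝ,
      ∀ y : Euc M, R < ‖y‖ → ∀ x ∈ B, ∀ a ∈ A, c < ℓ x y a)
    (u0 : Euc N → Euc M → ℝ)
    (hu0Cont : Continuous fun z : Euc N × Euc M => u0 z.1 z.2)
    (hu0Bdd : ∀ x y, -Q0 ≤ u0 x y)
 :
    LocEquibounded (valueFun A f g ℓ u0) ∧
    (∀ (x0 : Euc N) (y0 z0 : Euc M) (t0 : ℝ), 0 < t0 →
      upperLim (fun ε (z : Euc N × Euc M × ℝ) => valueFun A f g ℓ u0 ε z.1 z.2.1 z.2.2)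
        (x0, y0, t0) =
      upperLim (fun ε (z : Euc N × Euc M × ℝ) => valueFun A f g ℓ u0 ε z.1 z.2.1 z.2.2)
        (x0, z0, t0)) ∧
    IsParabSubOn (effH A f g ℓ) (univ ×ˢ Ioi (0:ℝ))
      (fun w : Euc N × ℝ =>
        upperLim (fun ε (z : Euc N × Euc M × ℝ) => valueFun A f g ℓ u0 ε z.1 z.2.1 z.2.2)
          (w.1, (0 : Euc M), w.2)) ∧
    (∀ x0 : Euc N, ∀ c : ℝ, (⨅ y : Euc M, u0 x0 y) < c →
      ∀ᶠ w : Euc N × ℝ in 𝓝[{w : Euc N × ℝ | 0 < w.2}] (x0, 0),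
        upperLim (fun ε (z : Euc N × Euc M × ℝ) => valueFun A f g ℓ u0 ε z.1 z.2.1 z.2.2)
          (w.1, (0 : Euc M), w.2) < c) := by
  have H : IsControlSystem A f g ℓ ⟨L0, hL0.le⟩ Q0 :=
    ⟨hA, hAne, hfLip, hgLip, hfBdd, hctrl, hlCont, hlCoer⟩
  have C : IsInitialDatum u0 Q0 := ⟨hu0Cont, hu0Bdd⟩
  exact ⟨locEquibounded_valueFun H C,
    fun x y y' t ht ↦ upperLim_valueFamily_eq H C x y y' ht,
    isParabSubOn_upperLim_valueFamily H C 0,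
    fun x c hc ↦ eventually_upperLim_valueFamily_lt H C x 0 hc⟩
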